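/- Let n ≥ 1, let p ∈ (−n−1, 0], and let K be a smooth, strictly convex body in ℝ^{n+1} with positive support function h satisfying det(A(x) + x⊗x) = h(x)^{p−1} for all x ∈ S^n. Set c := (∫ ∇h_K h^p dθ)/(∫ h^p dθ) and h̃(x) := h(x) − ⟨x, c⟩. Then ∫_{S^n} (|∇h_K(x) − c|² − h̃(x)²) h^p dθ ≤ (n·p·|c|²/((n+1)(n+1+p)))·∫_{S^n} h^p dθ; in particular, since p ≤ 0, the spherical gradient of h̃ vanishes identically and h̃ is constant on S^n. -/

import Mathlib

open MeasureTheory Metric Real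
open scoped InnerProductSpace ENNReal Topology

noncomputable section

/-- Euclidean space `ℝ^{n+1}`. -/
abbrev Eu (n : ℕ) : Type := EuclideanSpace ℝ (Fin (n + 1))

/-- The unit sphere `S^n ⊆ ℝ^{n+1}` as a subtype. -/
abbrev Sph (n : ℕ) : Type := Metric.sphere (0 : Eu n) 1

/-- The spherical Lebesgue (surface) measure on `S^n`. -/
def sphMeas (n : ℕ) : Measure (Sph n) := (volume : Measure (Eu n)).toSphere

/-- The support function of a set `K ⊆ ℝ^{n+1}`. -/
def sfn {n : ℕ} (K : Set (Eu n)) (z : Eu n) : ℝ :=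
  sSup ((fun y => ⟪z, y⟫_ℝ) '' K)

/-- The Hessian endomorphism `A(x) = D(∇ h_K)(x)`. -/
def hessA {n : ℕ} (K : Set (Eu n)) (x : Eu n) : Eu n →L[ℝ] Eu n :=
  fderiv ℝ (gradient (sfn K)) x

/-- The rank-one endomorphism `x ⊗ x : v ↦ ⟨v, x⟩ x`. -/
def tens {n : ℕ} (x : Eu n) : Eu n →L[ℝ] Eu n :=
  (innerSL ℝ x).smulRight x

/-- `det (A(x) + x ⊗ x)`, the reciprocal Gauss curvature `1/𝒦` at `x ∈ S^n`. -/
def rK {n : ℕ} (K : Set (Eu n)) (x : Eu n) : ℝ :=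
  LinearMap.det ((hessA K x + tens x : Eu n →L[ℝ] Eu n) : Eu n →ₗ[ℝ] Eu n)

/-- `K` is a smooth, strictly convex body with positive support function. -/
structure IsSmoothConvexBody {n : ℕ} (K : Set (Eu n)) : Prop where
  compact : IsCompact K
  convex : Convex ℝ K
  interior_nonempty : (interior K).Nonempty
  pos : ∀ x : Sph n, 0 < sfn K x
  smooth : ContDiffOn ℝ (⊤ : ℕ∞) (sfn K) {(0 : Eu n)}ᶜ
  posdef : ∀ x : Sph n, ∀ v : Eu n, v ≠ 0 →
    0 < ⟪(hessA K (x : Eu n) + tens (x : Eu n)) v, v⟫_ℝ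

/-- The density `h·det(A + x⊗x)` of the measure `dV` with respect to `dθ`. -/
def dens {n : ℕ} (K : Set (Eu n)) (x : Eu n) : ℝ := sfn K x * rK K x

/-- The centroid-type point `c(K) = (∫ ∇h_K dV)/(∫ dV)`. -/
def cK {n : ℕ} (K : Set (Eu n)) : Eu n :=
  (∫ x : Sph n, dens K x ∂sphMeas n)⁻¹ •
    ∫ x : Sph n, dens K x • gradient (sfn K) x ∂sphMeas n

/-- The support function of the translated body `K - c(K)`. -/
def tsfn {n : ℕ} (K : Set (Eu n)) (x : Eu n) : ℝ := sfn K x - ⟪x, cK K⟫_ℝ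

lemma finrank_Eu (n : ℕ) : Module.finrank ℝ (Eu n) = n + 1 := by simp

/-- polar coordinates for products. -/
lemma polar_prod (n : ℕ) (χ : ℝ → ℝ) (ψ : Eu n → ℝ) :
    ∫ x : Eu n, χ ‖x‖ * ψ (‖x‖⁻¹ • x) =
      (∫ x : Sph n, ψ x ∂sphMeas n) * ∫ r in Set.Ioi (0 : ℝ), r ^ n * χ r := by
  have h1 := (volume : Measure (Eu n)).measurePreserving_homeomorphUnitSphereProd.integral_comp'
    (f := (homeomorphUnitSphereProd (Eu n)).toMeasurableEquiv)
    (g := fun z : Sph n × Set.Ioi (0 : ℝ) => ψ z.1 * χ z.2)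
  rw [integral_prod_mul (μ := (volume : Measure (Eu n)).toSphere) (fun a : Sph n => ψ a)
    (fun b : Set.Ioi (0 : ℝ) => χ b)] at h1
  rw [sphMeas]
  have e3 : ∫ x : Eu n, χ ‖x‖ * ψ (‖x‖⁻¹ • x) = ∫ x in {(0 : Eu n)}ᶜ, χ ‖x‖ * ψ (‖x‖⁻¹ • x) := by
    rw [restrict_compl_singleton (μ := (volume : Measure (Eu n))) 0]
  rw [e3, ← integral_subtype_comap (measurableSet_singleton _).compl (fun x : Eu n => χ ‖x‖ * ψ (‖x‖⁻¹ • x))]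
  have e2 : ∫ y, χ y ∂(Measure.volumeIoiPow (Module.finrank ℝ (Eu n) - 1)) =
      ∫ r in Set.Ioi (0 : ℝ), r ^ n * χ r := by
    have : Module.finrank ℝ (Eu n) - 1 = n := by simp
    rw [this, Measure.volumeIoiPow, integral_withDensity_eq_integral_toReal_smul (by fun_prop) (by simp),
      ← integral_subtype_comap measurableSet_Ioi]
    refine integral_congr_ae (Filter.Eventually.of_forall fun r => ?_)
    have : 0 ≤ (r : ℝ) ^ n := pow_nonneg (le_of_lt r.2) _
    simp [ENNReal.toReal_ofReal this]
  rw [← e2, ← h1]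
  refine integral_congr_ae (Filter.Eventually.of_forall fun r => ?_)
  simp [mul_comm]

lemma polar_lint (n : ℕ) (g : Eu n → ℝ≥0∞) (hg : Measurable g) :
    ∫⁻ x in {(0 : Eu n)}ᶜ, g x =
      ∫⁻ x : Sph n, (∫⁻ r in Set.Ioi (0 : ℝ), ENNReal.ofReal (r ^ n) * g (r • (x : Eu n))) ∂sphMeas n := by
  have h1 := (volume : Measure (Eu n)).measurePreserving_homeomorphUnitSphereProd.lintegral_comp
    (f := fun z : Sph n × Set.Ioi (0 : ℝ) => g ((z.2 : ℝ) • (z.1 : Eu n)))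
    (hg.comp (by fun_prop))
  rw [lintegral_prod (fun z : Sph n × Set.Ioi (0 : ℝ) => g ((z.2 : ℝ) • (z.1 : Eu n)))
    (hg.comp (by fun_prop)).aemeasurable] at h1
  rw [sphMeas, ← lintegral_subtype_comap (measurableSet_singleton _).compl]
  have e2 : ∀ x : Sph n, ∫⁻ y : Set.Ioi (0 : ℝ), g ((y : ℝ) • (x : Eu n)) ∂(Measure.volumeIoiPow (Module.finrank ℝ (Eu n) - 1)) =
      ∫⁻ r in Set.Ioi (0 : ℝ), ENNReal.ofReal (r ^ n) * g (r • (x : Eu n)) := by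
    intro x
    have : Module.finrank ℝ (Eu n) - 1 = n := by simp
    rw [this, Measure.volumeIoiPow, lintegral_withDensity_eq_lintegral_mul _ (by fun_prop)
        (g := fun y : Set.Ioi (0 : ℝ) => g ((y : ℝ) • (x : Eu n))) (hg.comp (by fun_prop)),
      ← lintegral_subtype_comap measurableSet_Ioi]
    rfl
  simp only [e2] at h1
  rw [← h1]
  refine lintegral_congr fun r => ?_
  have : ‖(r : Eu n)‖ ≠ 0 := norm_ne_zero_iff.2 r.2
  simp [smul_smul, this]

lemma div_sphere_aux (n : ℕ) (f : Eu n → ℝ) (hf : ContDiffOn ℝ 1 f {0}ᶜ)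
    (hom : ∀ x : Eu n, x ≠ 0 → ∀ r : ℝ, 0 < r → f (r • x) = (r ^ n)⁻¹ * f x) (v : Eu n) :
    ∫ x : Sph n, fderiv ℝ f (x : Eu n) v ∂sphMeas n = 0 := by
  have hdf : ∀ x : Eu n, x ≠ 0 → DifferentiableAt ℝ f x := fun x hx =>
    (hf.contDiffAt (isOpen_compl_singleton.mem_nhds hx)).differentiableAt (by norm_num)
  have hom' : ∀ x : Eu n, x ≠ 0 → fderiv ℝ f x = (‖x‖ ^ (n + 1))⁻¹ • fderiv ℝ f (‖x‖⁻¹ • x) := by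
    intro x hx
    have hr : 0 < ‖x‖⁻¹ := by positivity
    have hx' : ‖x‖⁻¹ • x ≠ 0 := smul_ne_zero hr.ne' hx
    have h1 : HasFDerivAt (fun z : Eu n => f (‖x‖⁻¹ • z)) (‖x‖⁻¹ • fderiv ℝ f (‖x‖⁻¹ • x)) x := by
      have := (hdf _ hx').hasFDerivAt.comp x ((hasFDerivAt_id x).const_smul ‖x‖⁻¹)
      refine this.congr_fderiv ?_
      ext w
      simp
    have h2 : HasFDerivAt (fun z : Eu n => f (‖x‖⁻¹ • z)) ((‖x‖⁻¹ ^ n)⁻¹ • fderiv ℝ f x) x := by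
      refine ((hdf x hx).hasFDerivAt.const_mul _).congr_of_eventuallyEq ?_
      filter_upwards [isOpen_compl_singleton.mem_nhds hx] with z hz
      exact hom z hz _ hr
    have h3 := h1.unique h2
    have hxn : ‖x‖ ≠ 0 := norm_ne_zero_iff.2 hx
    rw [pow_succ, mul_inv, mul_smul, h3, smul_smul]
    simp [hxn]
  let b : ContDiffBump (2 : ℝ) := ⟨1/2, 1, by norm_num, by norm_num⟩
  have hb0 : ∀ r : ℝ, r ∈ tsupport b → 1 ≤ r := by
    intro r hr
    rw [b.tsupport_eq, mem_closedBall, Real.dist_eq, abs_le] at hr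
    have : b.rOut = 1 := rfl
    rw [this] at hr
    linarith [hr.1]
  -- product function
  let F : Eu n → ℝ := fun x => b ‖x‖ * f x
  have hsupp : tsupport F ⊆ (fun x : Eu n => ‖x‖) ⁻¹' tsupport b := by
    refine closure_minimal ?_ ((isClosed_tsupport _).preimage continuous_norm)
    intro x hx
    refine subset_tsupport _ ?_
    simp only [Function.mem_support, F] at hx ⊢
    exact left_ne_zero_of_mul hx
  have hFc : HasCompactSupport F := by
    have : IsCompact ((fun x : Eu n => ‖x‖) ⁻¹' tsupport b) := by
      refine Metric.isCompact_of_isClosed_isBounded ((isClosed_tsupport _).preimage continuous_norm) ?_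
      refine (Metric.isBounded_closedBall (x := (0 : Eu n)) (r := 3)).subset ?_
      intro x hx
      have hx : ‖x‖ ∈ tsupport b := hx
      rw [b.tsupport_eq, mem_closedBall, Real.dist_eq, abs_le] at hx
      have : b.rOut = 1 := rfl
      rw [this] at hx
      simp
      linarith [hx.2]
    exact this.of_isClosed_subset (isClosed_tsupport _) hsupp
  have hFs : ContDiff ℝ 1 F := by
    refine contDiff_iff_contDiffAt.2 fun x => ?_
    by_cases hx : x ∈ tsupport F
    swap
    · exact contDiffAt_const.congr_of_eventuallyEq (notMem_tsupport_iff_eventuallyEq.1 hx)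
    have hx1 : 1 ≤ ‖x‖ := hb0 _ (hsupp hx)
    have hx0 : x ≠ 0 := by
      rintro rfl
      simp at hx1
      linarith
    exact ((b.contDiff (n := 1)).contDiffAt.comp x (contDiffAt_norm ℝ hx0)).mul
      (hf.contDiffAt (isOpen_compl_singleton.mem_nhds hx0))
  have hFd : ∫ x, fderiv ℝ F x v = 0 := by
    have hc : Continuous (fun x => fderiv ℝ F x v) := by
      have := hFs.continuous_fderiv (by norm_num)
      fun_prop
    have := integral_mul_fderiv_eq_neg_fderiv_mul_of_integrable (μ := (volume : Measure (Eu n)))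
      (f := fun _ => (1 : ℝ)) (g := F) (v := v) (by simp)
      (by simpa using hc.integrable_of_hasCompactSupport (hFc.fderiv_apply (𝕜 := ℝ) v))
      (by simpa using hFs.continuous.integrable_of_hasCompactSupport hFc)
      (by simp) (fun x _ => hFs.differentiable (by norm_num) x)
    simpa using this
  have hFe : ∀ x : Eu n, fderiv ℝ F x v =
      (deriv b ‖x‖ * (‖x‖ ^ n)⁻¹) * (⟪‖x‖⁻¹ • x, v⟫_ℝ * f (‖x‖⁻¹ • x)) +
      (b ‖x‖ * (‖x‖ ^ (n + 1))⁻¹) * fderiv ℝ f (‖x‖⁻¹ • x) v := by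
    intro x
    by_cases hx : x = 0
    · subst hx
      have e0 : b (0 : ℝ) = 0 := by
        refine image_eq_zero_of_notMem_tsupport fun h => ?_
        linarith [hb0 _ h]
      have e1 : (0 : Eu n) ∉ tsupport F := fun h => by
        have := hb0 _ (hsupp h)
        simp at this
        linarith
      have e2 : fderiv ℝ F 0 = 0 := by
        refine image_eq_zero_of_notMem_tsupport fun h => e1 (tsupport_fderiv_subset ℝ h)
      simp [e0, e2]
    · have hxn : ‖x‖ ≠ 0 := norm_ne_zero_iff.2 hx
      have hn : HasFDerivAt (fun z : Eu n => ‖z‖) (‖x‖⁻¹ • innerSL ℝ x) x := by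
        have h1 := (hasStrictFDerivAt_norm_sq x).hasFDerivAt.sqrt (by positivity)
        simp only [Real.sqrt_sq (norm_nonneg _)] at h1
        refine h1.congr_fderiv ?_
        ext w
        simp
        field_simp
      have h1 : HasFDerivAt (fun z : Eu n => b ‖z‖) (deriv b ‖x‖ • (‖x‖⁻¹ • innerSL ℝ x)) x :=
        ((b.contDiff (n := 1)).differentiable (by norm_num) ‖x‖).hasDerivAt.comp_hasFDerivAt x hn
      have h2 := (h1.mul (hdf x hx).hasFDerivAt).fderiv
      have h3 : f (‖x‖⁻¹ • x) = ‖x‖ ^ n * f x := by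
        rw [hom x hx _ (by positivity)]
        simp
      change fderiv ℝ (fun z => b ‖z‖ * f z) x v = _
      erw [h2]
      rw [h3, hom' x hx]
      simp [inner_smul_left]
      field_simp
      ring
  have hbc : Continuous (deriv b) := (b.contDiff (n := 1)).continuous_deriv (by norm_num)
  have hbs : ∀ r : ℝ, r < 1 → b r = 0 := fun r hr =>
    image_eq_zero_of_notMem_tsupport fun h => by linarith [hb0 _ h]
  have hbs' : ∀ r : ℝ, r < 1 → deriv b r = 0 := fun r hr =>
    image_eq_zero_of_notMem_tsupport fun h => by linarith [hb0 _ (tsupport_deriv_subset h)]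
  have hb3 : ∀ r : ℝ, r ∈ tsupport b → r ≤ 3 := by
    intro r hr
    rw [b.tsupport_eq, mem_closedBall, Real.dist_eq, abs_le] at hr
    have : b.rOut = 1 := rfl
    rw [this] at hr
    linarith [hr.2]
  have key : ∀ (ω : ℝ → ℝ) (ψ : Eu n → ℝ), Continuous ω → (∀ r, r ∉ tsupport b → ω r = 0) →
      ContinuousOn ψ {0}ᶜ → ∀ k : ℕ,
      Integrable (fun x : Eu n => (ω ‖x‖ * (‖x‖ ^ k)⁻¹) * ψ (‖x‖⁻¹ • x)) := by
    intro ω ψ hω hω0 hψ k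
    let A : Set (Eu n) := closedBall 0 3 \ ball 0 1
    have hA : IsCompact A := (isCompact_closedBall _ _).diff isOpen_ball
    have hA0 : ∀ x ∈ A, x ≠ 0 := by
      rintro x hx rfl
      simp [A] at hx
    rw [← integrableOn_iff_integrable_of_support_subset (s := A)]
    · refine ContinuousOn.integrableOn_compact hA ?_
      have hinv : ContinuousOn (fun x : Eu n => ‖x‖⁻¹) A :=
        continuous_norm.continuousOn.inv₀ fun x hx => norm_ne_zero_iff.2 (hA0 x hx)
      have hk : ContinuousOn (fun x : Eu n => (‖x‖ ^ k)⁻¹) A :=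
        (continuous_norm.pow k).continuousOn.inv₀ fun x hx =>
          pow_ne_zero _ (norm_ne_zero_iff.2 (hA0 x hx))
      refine ((hω.comp continuous_norm).continuousOn.mul hk).mul
        (hψ.comp (hinv.smul continuousOn_id) ?_)
      intro x hx
      exact smul_ne_zero (inv_ne_zero (norm_ne_zero_iff.2 (hA0 x hx))) (hA0 x hx)
    · intro x hx
      have h1 : ω ‖x‖ ≠ 0 := left_ne_zero_of_mul (left_ne_zero_of_mul hx)
      have h2 : ‖x‖ ∈ tsupport b := by
        by_contra h
        exact h1 (hω0 _ h)
      exact ⟨by simpa using hb3 _ h2, by simpa using hb0 _ h2⟩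
  have hcd : ContinuousOn (fun x => fderiv ℝ f x v) {0}ᶜ :=
    (hf.continuousOn_fderiv_of_isOpen isOpen_compl_singleton (by norm_num)).clm_apply continuousOn_const
  have i1 := key (deriv b) (fun u => ⟪u, v⟫_ℝ * f u) hbc
    (fun r hr => image_eq_zero_of_notMem_tsupport fun h => hr (tsupport_deriv_subset h))
    ((continuous_id.inner continuous_const).continuousOn.mul hf.continuousOn) n
  have i2 := key b (fun u => fderiv ℝ f u v) b.continuous
    (fun r hr => image_eq_zero_of_notMem_tsupport hr) hcd (n + 1)
  simp only [hFe] at hFd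
  rw [integral_add i1 i2,
    polar_prod n (fun r => deriv b r * (r ^ n)⁻¹) (fun u => ⟪u, v⟫_ℝ * f u),
    polar_prod n (fun r => b r * (r ^ (n + 1))⁻¹) (fun u => fderiv ℝ f u v)] at hFd
  have z1 : ∫ r in Set.Ioi (0 : ℝ), r ^ n * (deriv b r * (r ^ n)⁻¹) = 0 := by
    have : ∫ r in Set.Ioi (0 : ℝ), r ^ n * (deriv b r * (r ^ n)⁻¹) = ∫ r in Set.Ioi (0 : ℝ), deriv b r := by
      refine setIntegral_congr_fun measurableSet_Ioi fun r hr => ?_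
      have : r ≠ 0 := ne_of_gt hr
      field_simp
    rw [this, setIntegral_eq_integral_of_forall_compl_eq_zero]
    · refine integral_eq_zero_of_hasDerivAt_of_integrable (f := b)
        (fun x => ((b.contDiff (n := 1)).differentiable (by norm_num) x).hasDerivAt)
        (hbc.integrable_of_hasCompactSupport b.hasCompactSupport.deriv)
        (b.continuous.integrable_of_hasCompactSupport b.hasCompactSupport)
    · intro r hr
      refine hbs' r ?_
      simp at hr
      linarith
  have z2 : 0 < ∫ r in Set.Ioi (0 : ℝ), r ^ n * (b r * (r ^ (n + 1))⁻¹) := by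
    have : ∫ r in Set.Ioi (0 : ℝ), r ^ n * (b r * (r ^ (n + 1))⁻¹)
        = ∫ r in Set.Ioi (0 : ℝ), b r * (max r 1)⁻¹ := by
      refine setIntegral_congr_fun measurableSet_Ioi fun r hr => ?_
      have h0 : r ≠ 0 := ne_of_gt hr
      rcases lt_or_ge r 1 with h | h
      · simp [hbs r h]
      · simp only [max_eq_left h]
        field_simp
        ring
    rw [this, setIntegral_eq_integral_of_forall_compl_eq_zero]
    · refine Continuous.integral_pos_of_hasCompactSupport_nonneg_nonzero (x := 2) ?_ ?_ ?_ ?_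
      · refine b.continuous.mul (Continuous.inv₀ (by fun_prop) fun x => ?_)
        have := le_max_right x 1
        intro h
        linarith
      · exact b.hasCompactSupport.mul_right
      · intro r
        exact mul_nonneg b.nonneg (inv_nonneg.2 (by positivity))
      · have : b 2 = 1 := b.one_of_mem_closedBall (by simp [b])
        simp [this]
    · intro r hr
      rw [hbs r, zero_mul]
      simp at hr
      linarith
  rw [z1] at hFd
  simpa [z2.ne'] using hFd

lemma hasFDerivAt_norm_Eu {n : ℕ} {x : Eu n} (hx : x ≠ 0) :
    HasFDerivAt (fun z : Eu n => ‖z‖) (‖x‖⁻¹ • innerSL ℝ x) x := by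
  have hxn : ‖x‖ ≠ 0 := norm_ne_zero_iff.2 hx
  have h1 := (hasStrictFDerivAt_norm_sq x).hasFDerivAt.sqrt (by positivity)
  simp only [Real.sqrt_sq (norm_nonneg _)] at h1
  refine h1.congr_fderiv ?_
  ext w
  simp
  field_simp

lemma div_sphere (n : ℕ) (g : Eu n → ℝ) (k : ℝ) (hg : ContDiffOn ℝ 1 g {0}ᶜ)
    (hom : ∀ x : Eu n, x ≠ 0 → ∀ r : ℝ, 0 < r → g (r • x) = r ^ k * g x) (v : Eu n) :
    ∫ x : Sph n, fderiv ℝ g (x : Eu n) v ∂sphMeas n =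
      (n + k) * ∫ x : Sph n, ⟪(x : Eu n), v⟫_ℝ * g x ∂sphMeas n := by
  have hdg : ∀ x : Eu n, x ≠ 0 → DifferentiableAt ℝ g x := fun x hx =>
    (hg.contDiffAt (isOpen_compl_singleton.mem_nhds hx)).differentiableAt (by norm_num)
  have hcd : ContinuousOn (fun x => fderiv ℝ g x v) {0}ᶜ :=
    (hg.continuousOn_fderiv_of_isOpen isOpen_compl_singleton (by norm_num)).clm_apply continuousOn_const
  have hS : ∀ x : Sph n, (x : Eu n) ≠ 0 := fun x => ne_zero_of_mem_unit_sphere x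
  have h := div_sphere_aux n (fun x => ‖x‖ ^ (-(n : ℝ) - k) * g x) ?_ ?_ v
  · have e : ∀ x : Sph n, fderiv ℝ (fun x : Eu n => ‖x‖ ^ (-(n : ℝ) - k) * g x) (x : Eu n) v =
        fderiv ℝ g (x : Eu n) v - (n + k) * (⟪(x : Eu n), v⟫_ℝ * g x) := by
      intro x
      have h1 := ((hasFDerivAt_norm_Eu (hS x)).rpow_const (p := -(n : ℝ) - k) (by simp)).mul
        (hdg x (hS x)).hasFDerivAt
      erw [h1.fderiv]
      simp
      ring
    simp only [e] at h
    have hm : MeasureTheory.IsFiniteMeasure (sphMeas n) := by unfold sphMeas; infer_instance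
    have i1 : Integrable (fun x : Sph n => fderiv ℝ g (x : Eu n) v) (sphMeas n) :=
      (hcd.comp_continuous continuous_subtype_val hS).integrable_of_hasCompactSupport
        (HasCompactSupport.of_compactSpace _)
    have i2 : Integrable (fun x : Sph n => ⟪(x : Eu n), v⟫_ℝ * g x) (sphMeas n) := by
      refine Continuous.integrable_of_hasCompactSupport ?_ (HasCompactSupport.of_compactSpace _)
      exact (continuous_subtype_val.inner continuous_const).mul
        (hg.continuousOn.comp_continuous continuous_subtype_val hS)
    rw [integral_sub i1 (i2.const_mul _), integral_const_mul] at h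
    linarith
  · intro x hx
    refine ContDiffAt.contDiffWithinAt ?_
    exact ((contDiffAt_norm ℝ hx).rpow_const_of_ne (norm_ne_zero_iff.2 hx)).mul
      (hg.contDiffAt (isOpen_compl_singleton.mem_nhds hx))
  · intro x hx r hr
    rw [hom x hx r hr, norm_smul, Real.norm_of_nonneg hr.le, Real.mul_rpow hr.le (norm_nonneg _),
      ← Real.rpow_natCast, ← Real.rpow_neg hr.le, show -(n : ℝ) = (-(n : ℝ) - k) + k by ring,
      Real.rpow_add hr]
    ring_nf

section BM
open scoped Pointwise

lemma bm_one_compact {A B C : Set ℝ} (hA : IsCompact A) (hB : IsCompact B) (hA0 : A.Nonempty)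
    (hB0 : B.Nonempty) (hC : ∀ x ∈ A, ∀ y ∈ B, (1 / 2 : ℝ) * (x + y) ∈ C) :
    volume A + volume B ≤ 2 * volume C := by
  obtain ⟨a, ha, ha'⟩ := hA.exists_isMaxOn hA0 continuousOn_id
  obtain ⟨b, hb, hb'⟩ := hB.exists_isMinOn hB0 continuousOn_id
  have key : ∀ (c : ℝ) (s : Set ℝ), volume ((fun x => (1 / 2 : ℝ) * (c + x)) '' s) = 2⁻¹ * volume s := by
    intro c s
    have : (fun x => (1 / 2 : ℝ) * (c + x)) '' s = (1 / 2 : ℝ) • ((fun x => c + x) '' s) := by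
      rw [← Set.image_smul, Set.image_image]
      rfl
    rw [this, Measure.addHaar_smul]
    have h2 : volume ((fun x => c + x) '' s) = volume s := by simp
    rw [h2]
    congr 1
    simp [ENNReal.ofReal_inv_of_pos]
  have h1 := key b A
  have h2 := key a B
  have hcA : IsCompact ((fun x => (1 / 2 : ℝ) * (b + x)) '' A) := hA.image (by fun_prop)
  have hcB : IsCompact ((fun x => (1 / 2 : ℝ) * (a + x)) '' B) := hB.image (by fun_prop)
  have hd : AEDisjoint volume ((fun x => (1 / 2 : ℝ) * (b + x)) '' A)
      ((fun x => (1 / 2 : ℝ) * (a + x)) '' B) := by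
    refine measure_mono_null (t := {(1 / 2 : ℝ) * (a + b)}) ?_ (by simp)
    rintro _ ⟨⟨x, hx, rfl⟩, ⟨y, hy, hxy⟩⟩
    have e1 : x ≤ a := ha' hx
    have e2 : b ≤ y := hb' hy
    simp only at hxy
    simp only [Set.mem_singleton_iff]
    linarith
  have h3 := measure_union₀ hcB.measurableSet.nullMeasurableSet hd
  have h4 : volume ((fun x => (1 / 2 : ℝ) * (b + x)) '' A ∪
      (fun x => (1 / 2 : ℝ) * (a + x)) '' B) ≤ volume C := by
    refine measure_mono ?_
    rintro _ (⟨x, hx, rfl⟩ | ⟨y, hy, rfl⟩)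
    · simpa [add_comm] using hC x hx b hb
    · exact hC a ha y hy
  rw [h3, h1, h2] at h4
  calc volume A + volume B = 2 * (2⁻¹ * volume A + 2⁻¹ * volume B) := by
        rw [mul_add, ← mul_assoc, ← mul_assoc, ENNReal.mul_inv_cancel (by simp) (by simp), one_mul, one_mul]
    _ ≤ _ := by gcongr

lemma bm_one {A B C : Set ℝ} (hA : MeasurableSet A) (hB : MeasurableSet B) (hA0 : A.Nonempty)
    (hB0 : B.Nonempty) (hC : ∀ x ∈ A, ∀ y ∈ B, (1 / 2 : ℝ) * (x + y) ∈ C) :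
    volume A + volume B ≤ 2 * volume C := by
  have step1 : ∀ KB ⊆ B, IsCompact KB → KB.Nonempty → volume A + volume KB ≤ 2 * volume C := by
    intro KB hKB hKBc hKB0
    obtain ⟨a, ha⟩ := hA0
    have hfin : volume KB ≠ ∞ := hKBc.measure_lt_top.ne
    have base : ∀ KA ⊆ A, IsCompact KA → volume KA + volume KB ≤ 2 * volume C := by
      intro KA hKA hKAc
      refine le_trans ?_ (bm_one_compact (A := insert a KA) (hKAc.insert a) hKBc (by simp) hKB0 ?_)
      · gcongr
        simp
      · intro x hx y hy
        exact hC x (Set.insert_subset ha hKA hx) y (hKB hy)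
    have : volume A ≤ 2 * volume C - volume KB := by
      rw [hA.measure_eq_iSup_isCompact]
      refine iSup₂_le fun K hK => iSup_le fun hKc => ?_
      exact ENNReal.le_sub_of_add_le_right hfin (base K hK hKc)
    calc volume A + volume KB ≤ (2 * volume C - volume KB) + volume KB := by gcongr
      _ = _ := tsub_add_cancel_of_le (by simpa using base ∅ (by simp) isCompact_empty)
  obtain ⟨b, hb⟩ := hB0
  by_cases hAt : volume A = ∞
  · have := step1 {b} (by simpa using hb) isCompact_singleton (by simp)
    simp only [hAt, top_add, top_le_iff] at this ⊢
    rw [this]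
  have : volume B ≤ 2 * volume C - volume A := by
    rw [hB.measure_eq_iSup_isCompact]
    refine iSup₂_le fun K hK => iSup_le fun hKc => ?_
    refine ENNReal.le_sub_of_add_le_left hAt (le_trans ?_ (step1 (insert b K) (Set.insert_subset hb hK) (hKc.insert b) (by simp)))
    gcongr
    simp
  calc volume A + volume B ≤ volume A + (2 * volume C - volume A) := by gcongr
    _ = _ := add_tsub_cancel_of_le (by
      have := step1 {b} (by simpa using hb) isCompact_singleton (by simp)
      simpa using this)

lemma layer (f : ℝ → ℝ≥0∞) (hf : Measurable f) (hf1 : ∀ x, f x ≤ 1) :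
    ∫⁻ x, f x = ∫⁻ t in Set.Ioo (0 : ℝ) 1, volume {x | ENNReal.ofReal t < f x} := by
  have h1 := lintegral_eq_lintegral_meas_lt (volume : Measure ℝ) (f := fun x => (f x).toReal)
    (Filter.Eventually.of_forall fun x => ENNReal.toReal_nonneg) hf.ennreal_toReal.aemeasurable
  have hft : ∀ x, f x ≠ ∞ := fun x => ((hf1 x).trans_lt (by simp)).ne
  simp only [ENNReal.ofReal_toReal (hft _)] at h1
  have hset : ∀ t : ℝ, 0 < t → {a | t < (f a).toReal} = {x | ENNReal.ofReal t < f x} := by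
    intro t ht
    ext x
    simp only [Set.mem_setOf_eq]
    rw [ENNReal.ofReal_lt_iff_lt_toReal ht.le (hft x)]
  rw [h1, ← Set.Ioo_union_Ici_eq_Ioi (show (0 : ℝ) < 1 by norm_num),
    lintegral_union measurableSet_Ici (by
      rw [Set.disjoint_left]
      intro x hx hx'
      exact absurd hx.2 (not_lt.2 hx'))]
  have z : ∫⁻ t in Set.Ici (1 : ℝ), volume {a | t < (f a).toReal} = 0 := by
    rw [setLIntegral_congr_fun (g := fun _ => 0) measurableSet_Ici]
    · simp
    · intro t ht
      have : {a | t < (f a).toReal} = ∅ := by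
        ext x
        simp only [Set.mem_setOf_eq, Set.mem_empty_iff_false, iff_false, not_lt]
        have : (f x).toReal ≤ 1 := ENNReal.toReal_le_of_le_ofReal (by norm_num) (by simpa using hf1 x)
        exact this.trans ht
      simp [this]
  rw [z, add_zero]
  refine setLIntegral_congr_fun measurableSet_Ioo fun t ht => ?_
  simp only [hset t ht.1]

lemma pl_norm (f g h : ℝ → ℝ≥0∞) (hf : Measurable f) (hg : Measurable g) (hh : Measurable h)
    (hf1 : ⨆ x, f x = 1) (hg1 : ⨆ x, g x = 1)
    (H : ∀ x y, f x * g y ≤ h ((1 / 2 : ℝ) * (x + y)) ^ 2) :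
    (∫⁻ x, f x) + ∫⁻ x, g x ≤ 2 * ∫⁻ x, h x := by
  have hf1' : ∀ x, f x ≤ 1 := fun x => hf1 ▸ le_iSup f x
  have hg1' : ∀ x, g x ≤ 1 := fun x => hg1 ▸ le_iSup g x
  have hm : ∀ u : ℝ → ℝ≥0∞, Measurable (fun t : ℝ => volume {x | ENNReal.ofReal t < u x}) := by
    intro u
    refine Antitone.measurable fun s t hst => measure_mono fun x hx => ?_
    exact lt_of_le_of_lt (ENNReal.ofReal_le_ofReal hst) hx
  have h2 : ∫⁻ x, min (h x) 1 ≤ ∫⁻ x, h x := lintegral_mono fun x => min_le_left _ _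
  refine le_trans ?_ (mul_le_mul_right h2 2)
  rw [layer f hf hf1', layer g hg hg1', layer _ (hh.min measurable_const) (fun x => min_le_right _ _),
    ← lintegral_add_left (hm f), ← lintegral_const_mul _ (hm _)]
  refine setLIntegral_mono ((hm _).const_mul _) fun t ht => ?_
  have ht1 : ENNReal.ofReal t < 1 := by simpa using ht.2
  refine bm_one (measurableSet_lt measurable_const hf) (measurableSet_lt measurable_const hg) ?_ ?_ ?_
  · rw [← hf1] at ht1
    exact lt_iSup_iff.1 ht1
  · rw [← hg1] at ht1
    exact lt_iSup_iff.1 ht1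
  · intro x hx y hy
    simp only [Set.mem_setOf_eq, lt_min_iff] at hx hy ⊢
    refine ⟨?_, ht1⟩
    by_contra hcon
    have h3 := H x y
    have h4 : ENNReal.ofReal t * ENNReal.ofReal t < f x * g y := ENNReal.mul_lt_mul hx hy
    have h5 : h ((1 / 2 : ℝ) * (x + y)) ^ 2 ≤ ENNReal.ofReal t ^ 2 := pow_le_pow_left' (not_lt.1 hcon) 2
    rw [← sq] at h4
    exact absurd (h4.trans_le (h3.trans h5)) (lt_irrefl _)

lemma ennreal_amgm (x y : ℝ≥0∞) : 4 * (x * y) ≤ (x + y) ^ 2 := by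
  wlog hxy : x ≤ y generalizing x y
  · rw [mul_comm x y, add_comm x y]
    exact this y x (le_of_not_ge hxy)
  obtain ⟨d, rfl⟩ := exists_add_of_le hxy
  calc 4 * (x * (x + d)) ≤ 4 * (x * (x + d)) + d ^ 2 := le_self_add
    _ = _ := by ring

lemma pl_bdd (f g h : ℝ → ℝ≥0∞) (hf : Measurable f) (hg : Measurable g) (hh : Measurable h)
    (M : ℝ≥0∞) (hM : M ≠ ∞) (hf1 : ∀ x, f x ≤ M) (hg1 : ∀ x, g x ≤ M)
    (H : ∀ x y, f x * g y ≤ h ((1 / 2 : ℝ) * (x + y)) ^ 2) :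
    (∫⁻ x, f x) * ∫⁻ x, g x ≤ (∫⁻ x, h x) ^ 2 := by
  set a := ⨆ x, f x with ha
  set b := ⨆ x, g x with hb
  have hat : a ≠ ∞ := ((iSup_le hf1).trans_lt hM.lt_top).ne
  have hbt : b ≠ ∞ := ((iSup_le hg1).trans_lt hM.lt_top).ne
  by_cases ha0 : a = 0
  · have : ∀ x, f x = 0 := fun x => le_antisymm (ha0 ▸ le_iSup f x) bot_le
    simp [this]
  by_cases hb0 : b = 0
  · have : ∀ x, g x = 0 := fun x => le_antisymm (hb0 ▸ le_iSup g x) bot_le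
    simp [this]
  set c : ℝ≥0∞ := (a⁻¹ * b⁻¹) ^ (1 / 2 : ℝ) with hc
  have hc2 : c ^ 2 = a⁻¹ * b⁻¹ := by
    rw [hc, ← ENNReal.rpow_natCast, ← ENNReal.rpow_mul]
    norm_num
  have h1 := pl_norm (fun x => a⁻¹ * f x) (fun x => b⁻¹ * g x) (fun x => c * h x)
    (hf.const_mul _) (hg.const_mul _) (hh.const_mul _)
    (by rw [← ENNReal.mul_iSup, ENNReal.inv_mul_cancel ha0 hat])
    (by rw [← ENNReal.mul_iSup, ENNReal.inv_mul_cancel hb0 hbt]) (by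
      intro x y
      rw [mul_pow, hc2, mul_mul_mul_comm]
      gcongr
      exact H x y)
  rw [lintegral_const_mul _ hf, lintegral_const_mul _ hg, lintegral_const_mul _ hh] at h1
  set I := ∫⁻ x, f x
  set J := ∫⁻ x, g x
  set L := ∫⁻ x, h x
  have h2 := (ennreal_amgm (a⁻¹ * I) (b⁻¹ * J)).trans (pow_le_pow_left' h1 2)
  have h3 : 4 * (a⁻¹ * b⁻¹) * (I * J) ≤ 4 * (a⁻¹ * b⁻¹) * L ^ 2 := by
    calc 4 * (a⁻¹ * b⁻¹) * (I * J) = 4 * (a⁻¹ * I * (b⁻¹ * J)) := by ring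
      _ ≤ _ := h2
      _ = _ := by rw [mul_pow, mul_pow, hc2]; ring
  refine (ENNReal.mul_le_mul_iff_right ?_ ?_).1 h3
  · simp [hat, hbt]
  · exact ENNReal.mul_ne_top (by simp) (ENNReal.mul_ne_top (by simp [ha0]) (by simp [hb0]))

lemma pl_one (f g h : ℝ → ℝ≥0∞) (hf : Measurable f) (hg : Measurable g) (hh : Measurable h)
    (H : ∀ x y, f x * g y ≤ h ((1 / 2 : ℝ) * (x + y)) ^ 2) :
    (∫⁻ x, f x) * ∫⁻ x, g x ≤ (∫⁻ x, h x) ^ 2 := by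
  have key : ∀ u : ℝ → ℝ≥0∞, Measurable u → ∫⁻ x, u x = ⨆ k : ℕ, ∫⁻ x, min (u x) k := by
    intro u hu
    rw [← lintegral_iSup (fun k => hu.min measurable_const)]
    · refine lintegral_congr fun x => ?_
      have : ⨆ k : ℕ, min (u x) (k : ℝ≥0∞) = min (u x) (⨆ k : ℕ, (k : ℝ≥0∞)) := by
        exact (inf_iSup_eq _ _).symm
      rw [this, ENNReal.iSup_natCast]
      simp
    · intro i j hij x
      exact min_le_min le_rfl (by exact_mod_cast hij)
  rw [key f hf, key g hg, ENNReal.iSup_mul]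
  refine iSup_le fun i => ?_
  rw [ENNReal.mul_iSup]
  refine iSup_le fun j => ?_
  refine pl_bdd _ _ h (hf.min measurable_const) (hg.min measurable_const) hh ((max i j : ℕ) : ℝ≥0∞) (by simp)
    (fun x => (min_le_right _ _).trans (by exact_mod_cast le_max_left i j))
    (fun x => (min_le_right _ _).trans (by exact_mod_cast le_max_right i j)) fun x y => ?_
  exact (mul_le_mul' (min_le_left _ _) (min_le_left _ _)).trans (H x y)

lemma pl_fin (n : ℕ) : ∀ (f g h : (Fin n → ℝ) → ℝ≥0∞), Measurable f → Measurable g → Measurable h →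
    (∀ x y, f x * g y ≤ h ((1 / 2 : ℝ) • (x + y)) ^ 2) →
    (∫⁻ x, f x) * ∫⁻ x, g x ≤ (∫⁻ x, h x) ^ 2 := by
  induction n with
  | zero =>
    intro f g h hf hg hh H
    have e : ∀ u : (Fin 0 → ℝ) → ℝ≥0∞, ∫⁻ x, u x = u 0 := by
      intro u
      rw [lintegral_unique]
      have : (volume : Measure (Fin 0 → ℝ)) Set.univ = 1 := by simp [volume_pi]
      rw [this, mul_one]
      congr 1
      exact Subsingleton.elim _ _
    simpa [e] using H 0 0
  | succ n ih =>
    intro f g h hf hg hh H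
    have hm : Measurable (fun z : ℝ × (Fin n → ℝ) => (Fin.cons z.1 z.2 : Fin (n + 1) → ℝ)) := by
      have := (MeasurableEquiv.piFinSuccAbove (fun _ : Fin (n + 1) => ℝ) 0).symm.measurable
      simpa [MeasurableEquiv.piFinSuccAbove_symm_apply, Fin.insertNthEquiv] using this
    have e : ∀ u : (Fin (n + 1) → ℝ) → ℝ≥0∞, Measurable u →
        ∫⁻ x, u x = ∫⁻ t : ℝ, ∫⁻ z : Fin n → ℝ, u (Fin.cons t z) := by
      intro u hu
      have h1 := (volume_preserving_piFinSuccAbove (fun _ : Fin (n + 1) => ℝ) 0).symm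
      rw [← h1.lintegral_comp hu]
      rw [Measure.volume_eq_prod, lintegral_prod]
      · simp [MeasurableEquiv.piFinSuccAbove_symm_apply, Fin.insertNthEquiv]
      · exact (hu.comp h1.measurable).aemeasurable
    have m : ∀ u : (Fin (n + 1) → ℝ) → ℝ≥0∞, Measurable u →
        Measurable fun t : ℝ => ∫⁻ z : Fin n → ℝ, u (Fin.cons t z) := fun u hu =>
      Measurable.lintegral_prod_right' (f := fun z : ℝ × (Fin n → ℝ) => u (Fin.cons z.1 z.2)) (hu.comp hm)
    have mc : ∀ t : ℝ, Measurable fun z : Fin n → ℝ => (Fin.cons t z : Fin (n + 1) → ℝ) := fun t =>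
      hm.comp (measurable_const.prodMk measurable_id)
    rw [e f hf, e g hg, e h hh]
    refine pl_one _ _ _ (m f hf) (m g hg) (m h hh) fun s t => ?_
    refine ih _ _ _ (hf.comp (mc s)) (hg.comp (mc t)) (hh.comp (mc _)) fun x y => ?_
    have := H (Fin.cons s x) (Fin.cons t y)
    convert! this using 3
    ext i
    refine Fin.cases ?_ (fun j => ?_) i <;> simp [mul_add]

/-- Multiplicative Brunn-Minkowski inequality for midpoints. -/
lemma bm_Eu (n : ℕ) {A B C : Set (Eu n)} (hA : MeasurableSet A) (hB : MeasurableSet B)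
    (hC : MeasurableSet C) (H : ∀ x ∈ A, ∀ y ∈ B, (1 / 2 : ℝ) • (x + y) ∈ C) :
    volume A * volume B ≤ volume C ^ 2 := by
  have hp := PiLp.volume_preserving_toLp (Fin (n + 1))
  rw [← hp.measure_preimage hA.nullMeasurableSet, ← hp.measure_preimage hB.nullMeasurableSet,
    ← hp.measure_preimage hC.nullMeasurableSet]
  have h1 := pl_fin (n + 1) (Set.indicator (WithLp.toLp 2 ⁻¹' A) 1) (Set.indicator (WithLp.toLp 2 ⁻¹' B) 1)
    (Set.indicator (WithLp.toLp 2 ⁻¹' C) 1)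
    (measurable_one.indicator (hp.measurable hA)) (measurable_one.indicator (hp.measurable hB))
    (measurable_one.indicator (hp.measurable hC)) (by
      intro x y
      by_cases hx : x ∈ WithLp.toLp 2 ⁻¹' A
      · by_cases hy : y ∈ WithLp.toLp 2 ⁻¹' B
        · have : (1 / 2 : ℝ) • (x + y) ∈ WithLp.toLp 2 ⁻¹' C := by
            simpa using H _ hx _ hy
          rw [Set.indicator_of_mem this]
          rw [Set.indicator_of_mem hx, Set.indicator_of_mem hy]
          simp
        · simp [Set.indicator_of_notMem hy]
      · simp [Set.indicator_of_notMem hx])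
  rwa [lintegral_indicator_one (hp.measurable hA), lintegral_indicator_one (hp.measurable hB),
    lintegral_indicator_one (hp.measurable hC)] at h1

end BM

namespace IsSmoothConvexBody
variable {n : ℕ} {K : Set (Eu n)}

lemma nonempty (hK : IsSmoothConvexBody K) : K.Nonempty :=
  hK.interior_nonempty.mono interior_subset

lemma exists_max (hK : IsSmoothConvexBody K) (z : Eu n) : ∃ y ∈ K, sfn K z = ⟪z, y⟫_ℝ :=
  hK.compact.exists_sSup_image_eq hK.nonempty (by fun_prop)

lemma inner_le (hK : IsSmoothConvexBody K) (z : Eu n) {y : Eu n} (hy : y ∈ K) :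
    ⟪z, y⟫_ℝ ≤ sfn K z :=
  le_csSup (hK.compact.bddAbove_image (by fun_prop)) ⟨y, hy, rfl⟩

lemma sfn_smul (hK : IsSmoothConvexBody K) {r : ℝ} (hr : 0 ≤ r) (z : Eu n) :
    sfn K (r • z) = r * sfn K z := by
  obtain ⟨y, hy, e⟩ := hK.exists_max z
  obtain ⟨y', hy', e'⟩ := hK.exists_max (r • z)
  apply le_antisymm
  · rw [e', real_inner_smul_left]
    exact mul_le_mul_of_nonneg_left (hK.inner_le z hy') hr
  · rw [e, ← real_inner_smul_left]
    exact hK.inner_le _ hy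

lemma sfn_add_le (hK : IsSmoothConvexBody K) (z w : Eu n) :
    sfn K (z + w) ≤ sfn K z + sfn K w := by
  obtain ⟨y, hy, e⟩ := hK.exists_max (z + w)
  rw [e, inner_add_left]
  exact add_le_add (hK.inner_le _ hy) (hK.inner_le _ hy)

lemma norm_smul_inv {x : Eu n} (hx : x ≠ 0) : ‖x‖ • (‖x‖⁻¹ • x) = x := by
  rw [smul_smul, mul_inv_cancel₀ (norm_ne_zero_iff.2 hx), one_smul]

lemma mem_sph {x : Eu n} (hx : x ≠ 0) : ‖x‖⁻¹ • x ∈ sphere (0 : Eu n) 1 := by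
  simp [norm_smul, norm_ne_zero_iff.2 hx]

lemma sfn_pos (hK : IsSmoothConvexBody K) {z : Eu n} (hz : z ≠ 0) : 0 < sfn K z := by
  rw [← norm_smul_inv hz, hK.sfn_smul (norm_nonneg _)]
  exact mul_pos (norm_pos_iff.2 hz) (hK.pos ⟨_, mem_sph hz⟩)

lemma sfn_zero (hK : IsSmoothConvexBody K) : sfn K (0 : Eu n) = 0 := by
  have := hK.sfn_smul le_rfl (0 : Eu n)
  simpa using this

lemma contDiffAt (hK : IsSmoothConvexBody K) {z : Eu n} (hz : z ≠ 0) :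
    ContDiffAt ℝ (⊤ : ℕ∞) (sfn K) z :=
  hK.smooth.contDiffAt (isOpen_compl_singleton.mem_nhds hz)

lemma hasFDerivAt (hK : IsSmoothConvexBody K) {z : Eu n} (hz : z ≠ 0) :
    HasFDerivAt (sfn K) (innerSL ℝ (gradient (sfn K) z)) z := by
  have := ((hK.contDiffAt hz).differentiableAt (by simp)).hasGradientAt
  rw [hasGradientAt_iff_hasFDerivAt] at this
  exact this

lemma grad_eq (hK : IsSmoothConvexBody K) {z k : Eu n} (hz : z ≠ 0) (hk : k ∈ K)
    (e : sfn K z = ⟪z, k⟫_ℝ) : gradient (sfn K) z = k := by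
  have h1 : IsLocalMin (fun w => sfn K w - innerSL ℝ k w) z := by
    refine Filter.Eventually.of_forall fun w => ?_
    simp only [innerSL_apply_apply]
    rw [real_inner_comm z k, e, real_inner_comm w k]
    linarith [hK.inner_le w hk]
  have h2 := h1.hasFDerivAt_eq_zero ((hK.hasFDerivAt hz).sub (innerSL ℝ k).hasFDerivAt)
  have h3 := congrArg (fun L : Eu n →L[ℝ] ℝ => L (gradient (sfn K) z - k)) h2
  simp only [ContinuousLinearMap.sub_apply, innerSL_apply_apply, ContinuousLinearMap.zero_apply, ← inner_sub_left] at h3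
  exact sub_eq_zero.1 (inner_self_eq_zero.1 h3)

lemma grad_mem (hK : IsSmoothConvexBody K) {z : Eu n} (hz : z ≠ 0) : gradient (sfn K) z ∈ K := by
  obtain ⟨y, hy, e⟩ := hK.exists_max z
  rwa [hK.grad_eq hz hy e]

lemma inner_grad (hK : IsSmoothConvexBody K) {z : Eu n} (hz : z ≠ 0) :
    ⟪z, gradient (sfn K) z⟫_ℝ = sfn K z := by
  obtain ⟨y, hy, e⟩ := hK.exists_max z
  rw [hK.grad_eq hz hy e, e]

lemma grad_smul (hK : IsSmoothConvexBody K) {z : Eu n} (hz : z ≠ 0) {r : ℝ} (hr : 0 < r) :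
    gradient (sfn K) (r • z) = gradient (sfn K) z := by
  refine hK.grad_eq (smul_ne_zero hr.ne' hz) (hK.grad_mem hz) ?_
  rw [real_inner_smul_left, hK.inner_grad hz, hK.sfn_smul hr.le]

lemma grad_contDiffAt (hK : IsSmoothConvexBody K) {z : Eu n} (hz : z ≠ 0) :
    ContDiffAt ℝ (⊤ : ℕ∞) (gradient (sfn K)) z := by
  have h1 : ContDiffAt ℝ (⊤ : ℕ∞) (fderiv ℝ (sfn K)) z :=
    (hK.contDiffAt hz).fderiv_right (by norm_cast)
  exact (InnerProductSpace.toDual ℝ (Eu n)).symm.contDiff.contDiffAt.comp z h1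

lemma grad_hasFDerivAt (hK : IsSmoothConvexBody K) {z : Eu n} (hz : z ≠ 0) :
    HasFDerivAt (gradient (sfn K)) (hessA K z) z :=
  ((hK.grad_contDiffAt hz).differentiableAt (by simp)).hasFDerivAt

lemma hess_contDiffAt (hK : IsSmoothConvexBody K) {z : Eu n} (hz : z ≠ 0) :
    ContDiffAt ℝ (⊤ : ℕ∞) (hessA K) z :=
  (hK.grad_contDiffAt hz).fderiv_right (by norm_cast)

lemma hess_symm (hK : IsSmoothConvexBody K) {z : Eu n} (hz : z ≠ 0) (v w : Eu n) :
    ⟪hessA K z v, w⟫_ℝ = ⟪hessA K z w, v⟫_ℝ := by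
  have h0 : IsSymmSndFDerivAt ℝ (sfn K) z :=
    (hK.contDiffAt hz).isSymmSndFDerivAt (by
      rw [minSmoothness_of_isRCLikeNormedField]
      exact WithTop.coe_le_coe.2 (le_top : (2 : ℕ∞) ≤ ⊤))
  have h1 : DifferentiableAt ℝ (fderiv ℝ (sfn K)) z :=
    ((hK.contDiffAt hz).fderiv_right (m := (⊤ : ℕ∞)) (by norm_cast)).differentiableAt (by simp)
  have h4 : ∀ z w : Eu n, ⟪gradient (sfn K) z, w⟫_ℝ = fderiv ℝ (sfn K) z w := fun z w =>
    InnerProductSpace.toDual_symm_apply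
  have h3 : ∀ v w, ⟪hessA K z v, w⟫_ℝ = fderiv ℝ (fderiv ℝ (sfn K)) z v w := by
    intro v w
    have h5 : HasFDerivAt (fun z => ⟪gradient (sfn K) z, w⟫_ℝ) ((innerSL ℝ w).comp (hessA K z)) z := by
      have := (innerSL ℝ w).hasFDerivAt.comp z (hK.grad_hasFDerivAt hz)
      refine this.congr_of_eventuallyEq (Filter.Eventually.of_forall fun y => ?_)
      simp [real_inner_comm]
    have h6 : HasFDerivAt (fun z => ⟪gradient (sfn K) z, w⟫_ℝ) ((fderiv ℝ (fderiv ℝ (sfn K)) z).flip w) z := by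
      simp only [h4]
      have := h1.hasFDerivAt.clm_apply (hasFDerivAt_const w z)
      simpa using this
    have h7 := congrArg (fun L : Eu n →L[ℝ] ℝ => L v) (h5.unique h6)
    simpa [real_inner_comm] using h7
  rw [h3, h3]
  exact h0 v w

lemma hess_self (hK : IsSmoothConvexBody K) {z : Eu n} (hz : z ≠ 0) : hessA K z z = 0 := by
  have h1 : HasDerivAt (fun t : ℝ => t • z) z 1 := by
    simpa using (hasDerivAt_id (1 : ℝ)).smul_const z
  have h2 : HasDerivAt (fun t : ℝ => gradient (sfn K) (t • z)) (hessA K z z) 1 := by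
    refine HasFDerivAt.comp_hasDerivAt (l := gradient (sfn K)) (l' := hessA K z) (1 : ℝ) ?_ h1
    simpa using hK.grad_hasFDerivAt hz
  refine h2.unique ((hasDerivAt_const (1 : ℝ) (gradient (sfn K) z)).congr_of_eventuallyEq ?_)
  filter_upwards [lt_mem_nhds (show (0 : ℝ) < 1 by norm_num)] with t ht
  exact hK.grad_smul hz ht

lemma inner_hess_self (hK : IsSmoothConvexBody K) {z : Eu n} (hz : z ≠ 0) (v : Eu n) :
    ⟪z, hessA K z v⟫_ℝ = 0 := by
  rw [real_inner_comm, hK.hess_symm hz, hK.hess_self hz, inner_zero_left]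

lemma hess_smul (hK : IsSmoothConvexBody K) {z : Eu n} (hz : z ≠ 0) {r : ℝ} (hr : 0 < r) :
    hessA K (r • z) = r⁻¹ • hessA K z := by
  have h1 : HasFDerivAt (fun w => gradient (sfn K) (r • w)) (r • hessA K (r • z)) z := by
    have h3 := ((hK.grad_hasFDerivAt (smul_ne_zero hr.ne' hz)).comp z ((hasFDerivAt_id z).const_smul r))
    convert! h3 using 1
    ext v
    simp
  have h2 : HasFDerivAt (fun w => gradient (sfn K) (r • w)) (hessA K z) z := by
    refine (hK.grad_hasFDerivAt hz).congr_of_eventuallyEq ?_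
    filter_upwards [isOpen_compl_singleton.mem_nhds hz] with w hw
    exact hK.grad_smul hw hr
  rw [← h1.unique h2, smul_smul, inv_mul_cancel₀ hr.ne', one_smul]

lemma hess_ker (hK : IsSmoothConvexBody K) {z : Eu n} (hz : z ≠ 0) {v : Eu n}
    (hv : hessA K z v = 0) : ∃ a : ℝ, v = a • z := by
  set x := ‖z‖⁻¹ • z with hx
  have hr : 0 < ‖z‖⁻¹ := inv_pos.2 (norm_pos_iff.2 hz)
  have hx0 : x ≠ 0 := smul_ne_zero hr.ne' hz
  have hx1 : ‖x‖ = 1 := by simpa using mem_sph hz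
  have hA : hessA K x v = 0 := by
    rw [hx, hK.hess_smul hz hr]
    simp [hv]
  have h1 : v - ⟪x, v⟫_ℝ • x = 0 := by
    by_contra hne
    have := hK.posdef ⟨x, mem_sph hz⟩ _ hne
    have h2 : hessA K x (v - ⟪x, v⟫_ℝ • x) = 0 := by
      rw [map_sub, map_smul, hA, hK.hess_self hx0]
      simp
    have h3 : ⟪x, v - ⟪x, v⟫_ℝ • x⟫_ℝ = 0 := by
      rw [inner_sub_right, real_inner_smul_right, real_inner_self_eq_norm_sq, hx1]
      ring
    simp only [ContinuousLinearMap.add_apply, h2, tens, ContinuousLinearMap.smulRight_apply, innerSL_apply_apply, h3] at this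
    simp at this
  refine ⟨⟪x, v⟫_ℝ * ‖z‖⁻¹, ?_⟩
  rw [← smul_smul, ← hx]
  exact sub_eq_zero.1 h1

end IsSmoothConvexBody

/-- The gradient of half the squared support function. -/
def Gm {n : ℕ} (K : Set (Eu n)) (y : Eu n) : Eu n := sfn K y • gradient (sfn K) y

/-- The derivative of `Gm`. -/
def dGm {n : ℕ} (K : Set (Eu n)) (y : Eu n) : Eu n →L[ℝ] Eu n :=
  sfn K y • hessA K y + tens (gradient (sfn K) y)

namespace IsSmoothConvexBody
variable {n : ℕ} {K : Set (Eu n)}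

lemma Gm_hasFDerivAt (hK : IsSmoothConvexBody K) {z : Eu n} (hz : z ≠ 0) :
    HasFDerivAt (Gm K) (dGm K z) z := by
  exact (hK.hasFDerivAt hz).smul (hK.grad_hasFDerivAt hz)

lemma Gm_injOn (hK : IsSmoothConvexBody K) : Set.InjOn (Gm K) {0}ᶜ := by
  intro y hy z hz e
  have hy0 : y ≠ 0 := hy
  have hz0 : z ≠ 0 := hz
  have py := hK.sfn_pos hy0
  have pz := hK.sfn_pos hz0
  have key : ∀ y z : Eu n, y ≠ 0 → z ≠ 0 → Gm K y = Gm K z → sfn K y ≤ sfn K z := by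
    intro y z hy0 hz0 e
    have h1 := congrArg (fun w => ⟪y, w⟫_ℝ) e
    simp only [Gm, real_inner_smul_right, hK.inner_grad hy0] at h1
    have h2 := hK.inner_le y (hK.grad_mem hz0)
    have h3 := mul_le_mul_of_nonneg_left h2 (hK.sfn_pos hz0).le
    rw [← h1] at h3
    exact le_of_mul_le_mul_right h3 (hK.sfn_pos hy0)
  have eh : sfn K y = sfn K z := le_antisymm (key y z hy0 hz0 e) (key z y hz0 hy0 e.symm)
  set k := gradient (sfn K) y with hk
  have ek : gradient (sfn K) z = k := by
    simp only [Gm, eh] at e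
    exact (smul_right_injective _ pz.ne' e).symm
  have hkK : k ∈ K := hK.grad_mem hy0
  have hseg : ∀ t ∈ Set.Icc (0 : ℝ) 1, sfn K (y + t • (z - y)) = ⟪y + t • (z - y), k⟫_ℝ := by
    intro t ht
    apply le_antisymm _ (hK.inner_le _ hkK)
    have : y + t • (z - y) = (1 - t) • y + t • z := by module
    rw [this]
    refine (hK.sfn_add_le _ _).trans ?_
    rw [hK.sfn_smul (by linarith [ht.2]), hK.sfn_smul ht.1, inner_add_left, real_inner_smul_left,
      real_inner_smul_left, hK.inner_grad hy0, ← ek, hK.inner_grad hz0]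
  have hcurve : HasDerivAt (fun t : ℝ => y + t • (z - y)) (z - y) 0 := by
    simpa using ((hasDerivAt_id (0 : ℝ)).smul_const (z - y)).const_add y
  have hd : HasDerivAt (fun t : ℝ => gradient (sfn K) (y + t • (z - y))) (hessA K y (z - y)) 0 := by
    refine HasFDerivAt.comp_hasDerivAt (l := gradient (sfn K)) (l' := hessA K y) (0 : ℝ) ?_ hcurve
    simpa using hK.grad_hasFDerivAt hy0
  have hev : ∀ᶠ t in 𝓝[Set.Ici 0] (0 : ℝ), gradient (sfn K) (y + t • (z - y)) = k := by
    have h1 : ∀ᶠ t in 𝓝 (0 : ℝ), y + t • (z - y) ≠ 0 := by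
      have := hcurve.continuousAt.eventually_ne (y := (0 : Eu n)) (by simpa using hy0)
      exact this
    have h2 : ∀ᶠ t in 𝓝 (0 : ℝ), t < 1 := gt_mem_nhds (by norm_num)
    filter_upwards [nhdsWithin_le_nhds h1, nhdsWithin_le_nhds h2, self_mem_nhdsWithin] with t a b c
    exact hK.grad_eq a hkK (hseg t ⟨c, b.le⟩)
  have hA : hessA K y (z - y) = 0 := by
    have h1 := hd.hasDerivWithinAt (s := Set.Ici 0)
    have h2 : HasDerivWithinAt (fun t : ℝ => gradient (sfn K) (y + t • (z - y))) 0 (Set.Ici 0) 0 :=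
      (hasDerivWithinAt_const (0 : ℝ) _ k).congr_of_eventuallyEq hev (by simp [hk])
    exact (uniqueDiffWithinAt_Ici (0 : ℝ)).eq_deriv _ h1 h2
  obtain ⟨a, ha⟩ := hK.hess_ker hy0 hA
  have hz' : z = (1 + a) • y := by
    rw [add_smul, one_smul, ← ha]
    abel
  have h1 : sfn K z = (1 + a) * sfn K y := by
    rw [← hK.inner_grad hz0, ek]
    conv_lhs => rw [hz', real_inner_smul_left]
    rw [hk, hK.inner_grad hy0]
  rw [← eh] at h1
  have h2 : a = 0 := by
    have : a * sfn K y = 0 := by linarith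
    exact (mul_eq_zero.1 this).resolve_right py.ne'
  rw [hz', h2]
  simp

lemma Gm_surj (hK : IsSmoothConvexBody K) {m : Eu n} (hm : m ≠ 0) : ∃ y, y ≠ 0 ∧ Gm K y = m := by
  have hne : ∀ u ∈ sphere (0 : Eu n) 1, u ≠ 0 := by
    rintro u hu rfl
    simp at hu
  have hcont : ContinuousOn (fun u => ⟪m, u⟫_ℝ / sfn K u) (sphere (0 : Eu n) 1) := by
    refine ContinuousOn.div (by fun_prop) ?_ fun u hu => (hK.sfn_pos (hne u hu)).ne'
    exact fun u hu => (hK.contDiffAt (hne u hu)).continuousAt.continuousWithinAt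
  obtain ⟨u, hu, hmax⟩ := (isCompact_sphere (0 : Eu n) 1).exists_isMaxOn ⟨_, mem_sph hm⟩ hcont
  have hu0 := hne u hu
  have pu := hK.sfn_pos hu0
  set l := ⟪m, u⟫_ℝ / sfn K u with hl
  have hl0 : 0 < l := by
    refine lt_of_lt_of_le ?_ (hmax (mem_sph hm))
    refine div_pos ?_ (hK.sfn_pos (hne _ (mem_sph hm)))
    rw [real_inner_smul_right, real_inner_self_eq_norm_sq]
    have := norm_pos_iff.2 hm
    positivity
  have hle : ∀ z : Eu n, ⟪m, z⟫_ℝ ≤ l * sfn K z := by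
    intro z
    by_cases hz : z = 0
    · simp [hz, hK.sfn_zero]
    have h1 := hmax (mem_sph hz)
    simp only [Set.mem_setOf_eq] at h1
    rw [div_le_iff₀ (hK.sfn_pos (hne _ (mem_sph hz)))] at h1
    rw [← norm_smul_inv hz, real_inner_smul_right, hK.sfn_smul (norm_nonneg _)]
    calc ‖z‖ * ⟪m, ‖z‖⁻¹ • z⟫_ℝ ≤ ‖z‖ * (l * sfn K (‖z‖⁻¹ • z)) :=
          mul_le_mul_of_nonneg_left h1 (norm_nonneg _)
      _ = _ := by ring
  have h1 : IsLocalMin (fun w => l * sfn K w - innerSL ℝ m w) u := by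
    refine Filter.Eventually.of_forall fun w => ?_
    simp only [innerSL_apply_apply]
    have e : l * sfn K u = ⟪m, u⟫_ℝ := by
      rw [hl, div_mul_cancel₀ _ pu.ne']
    linarith [hle w]
  have h2 := h1.hasFDerivAt_eq_zero (((hK.hasFDerivAt hu0).const_mul l).sub (innerSL ℝ m).hasFDerivAt)
  have h3 := congrArg (fun L : Eu n →L[ℝ] ℝ => L (l • gradient (sfn K) u - m)) h2
  simp only [ContinuousLinearMap.sub_apply, ContinuousLinearMap.smul_apply, smul_eq_mul,
    innerSL_apply_apply, ContinuousLinearMap.zero_apply, ← real_inner_smul_left, ← inner_sub_left] at h3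
  have h4 := sub_eq_zero.1 (inner_self_eq_zero.1 h3)
  have hr : 0 < l / sfn K u := div_pos hl0 pu
  refine ⟨(l / sfn K u) • u, smul_ne_zero hr.ne' hu0, ?_⟩
  rw [Gm, hK.grad_smul hu0 hr, hK.sfn_smul hr.le, div_mul_cancel₀ _ pu.ne', h4]

lemma dGm_smul (hK : IsSmoothConvexBody K) {z : Eu n} (hz : z ≠ 0) {r : ℝ} (hr : 0 < r) :
    dGm K (r • z) = dGm K z := by
  rw [dGm, dGm, hK.grad_smul hz hr, hK.hess_smul hz hr, hK.sfn_smul hr.le, smul_smul]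
  congr 2
  field_simp

lemma det_dGm (hK : IsSmoothConvexBody K) (x : Sph n) :
    (dGm K x).det = sfn K x ^ (n + 2) * rK K x := by
  have hx1 : ‖(x : Eu n)‖ = 1 := by simp
  have hx0 : (x : Eu n) ≠ 0 := by
    intro h
    simp [h] at hx1
  obtain ⟨x, hx⟩ := x
  simp only at hx1 hx0 ⊢
  set h := sfn K x with hh
  have ph : 0 < h := hK.sfn_pos hx0
  set X := gradient (sfn K) x with hX
  have hXx : ⟪x, X⟫_ℝ = h := hK.inner_grad hx0
  set w := h⁻¹ • X - x with hw
  have hxx : ⟪x, x⟫_ℝ = 1 := by rw [real_inner_self_eq_norm_sq, hx1]; norm_num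
  have hwx : ⟪w, x⟫_ℝ = 0 := by
    rw [hw, inner_sub_left, real_inner_smul_left, real_inner_comm, hXx, hxx, inv_mul_cancel₀ ph.ne']
    norm_num
  let fw : Module.Dual ℝ (Eu n) := (innerSL ℝ w : Eu n →L[ℝ] ℝ)
  let fx : Module.Dual ℝ (Eu n) := (innerSL ℝ x : Eu n →L[ℝ] ℝ)
  have e : ((dGm K x : Eu n →L[ℝ] Eu n) : Eu n →ₗ[ℝ] Eu n) =
      (LinearMap.transvection fx w) ∘ₗ ((h • ((hessA K x + tens x : Eu n →L[ℝ] Eu n) : Eu n →ₗ[ℝ] Eu n)) ∘ₗ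
        ((LinearMap.transvection fx ((h - 1) • x)) ∘ₗ (LinearMap.transvection fw x))) := by
    ext1 v
    have hxA := hK.inner_hess_self hx0
    have hAx := hK.hess_self hx0
    have h1 : ⟪w, v⟫_ℝ = h⁻¹ * ⟪X, v⟫_ℝ - ⟪x, v⟫_ℝ := by
      rw [hw, inner_sub_left, real_inner_smul_left]
    simp only [LinearMap.comp_apply, LinearMap.transvection.apply, fx, fw, dGm, tens,
      ContinuousLinearMap.coe_coe, LinearMap.smul_apply, innerSL_apply_apply, map_add, map_smul,
      ContinuousLinearMap.add_apply, ContinuousLinearMap.smul_apply, ContinuousLinearMap.smulRight_apply,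
      hxA, hAx, inner_add_right, real_inner_smul_right, inner_zero_right, hxx, ← hh, ← hX]
    rw [h1, hw]
    match_scalars <;> field_simp <;> ring
  show LinearMap.det _ = _
  rw [e, LinearMap.det_comp, LinearMap.det_comp, LinearMap.det_comp, LinearMap.transvection.det,
    LinearMap.transvection.det, LinearMap.transvection.det, LinearMap.det_smul, finrank_Eu]
  simp only [fx, fw, ContinuousLinearMap.coe_coe, innerSL_apply_apply, real_inner_smul_right, hxx, hwx]
  rw [real_inner_comm, hwx, rK]
  ring

end IsSmoothConvexBody

lemma sph_ne_zero {n : ℕ} (x : Sph n) : (x : Eu n) ≠ 0 := by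
  intro h
  have := x.2
  simp [h] at this

instance sphMeas_finite (n : ℕ) : IsFiniteMeasure (sphMeas n) := by
  unfold sphMeas
  infer_instance

instance sphMeas_openPos (n : ℕ) : (sphMeas n).IsOpenPosMeasure := by
  unfold sphMeas
  infer_instance

lemma sph_integrable {n : ℕ} {f : Sph n → ℝ} (hf : Continuous f) : Integrable f (sphMeas n) :=
  hf.integrable_of_hasCompactSupport (HasCompactSupport.of_compactSpace f)

lemma sph_continuous {n : ℕ} {E : Type*} [TopologicalSpace E] {f : Eu n → E}
    (hf : ∀ y, y ≠ 0 → ContinuousAt f y) : Continuous fun x : Sph n => f x :=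
  continuous_iff_continuousAt.2 fun x =>
    (hf x (sph_ne_zero x)).comp continuous_subtype_val.continuousAt

/-- sublevel sets in the gradient picture. -/
def Dset {n : ℕ} (K : Set (Eu n)) (s : Eu n → ℝ) : Set (Eu n) := {y | y ≠ 0 ∧ sfn K y ≤ s y}

namespace IsSmoothConvexBody
variable {n : ℕ} {K : Set (Eu n)}

lemma sfn_contAt (hK : IsSmoothConvexBody K) {z : Eu n} (hz : z ≠ 0) : ContinuousAt (sfn K) z :=
  (hK.contDiffAt hz).continuousAt

lemma grad_contAt (hK : IsSmoothConvexBody K) {z : Eu n} (hz : z ≠ 0) :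
    ContinuousAt (gradient (sfn K)) z :=
  (hK.grad_contDiffAt hz).continuousAt

lemma measurable_of_contAt {s : Eu n → ℝ} (hs : ∀ y, y ≠ 0 → ContinuousAt s y) : Measurable s :=
  measurable_of_continuousOn_compl_singleton 0 fun y hy => (hs y hy).continuousWithinAt

lemma Dset_meas (hK : IsSmoothConvexBody K) {s : Eu n → ℝ} (hs : ∀ y, y ≠ 0 → ContinuousAt s y) :
    MeasurableSet (Dset K s) :=
  (measurableSet_singleton (0 : Eu n)).compl.inter
    (measurableSet_le (measurable_of_contAt fun _ h => hK.sfn_contAt h) (measurable_of_contAt hs))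

lemma image_meas (hK : IsSmoothConvexBody K) {s : Eu n → ℝ} (hs : ∀ y, y ≠ 0 → ContinuousAt s y) :
    MeasurableSet (Gm K '' Dset K s) := by
  refine (hK.Dset_meas hs).image_of_continuousOn_injOn ?_ (hK.Gm_injOn.mono fun y hy => hy.1)
  exact fun y hy => (hK.Gm_hasFDerivAt hy.1).continuousAt.continuousWithinAt

lemma hp_cont (hK : IsSmoothConvexBody K) (q : ℝ) : Continuous fun x : Sph n => sfn K (x : Eu n) ^ q :=
  (sph_continuous fun _ h => hK.sfn_contAt h).rpow_const fun x => Or.inl (hK.pos x).ne'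

lemma vol_formula (hK : IsSmoothConvexBody K) {p : ℝ}
    (heq : ∀ x : Sph n, rK K (x : Eu n) = sfn K (x : Eu n) ^ (p - 1))
    {s : Eu n → ℝ} (hs : ∀ y, y ≠ 0 → ContinuousAt s y)
    (hom : ∀ y, y ≠ 0 → ∀ r : ℝ, 0 < r → s (r • y) = s y) (hpos : ∀ x : Sph n, 0 < s x) :
    volume (Gm K '' Dset K s) = ENNReal.ofReal (((n : ℝ) + 1)⁻¹ *
      ∫ x : Sph n, s x ^ (n + 1) * sfn K (x : Eu n) ^ p ∂sphMeas n) := by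
  have hmD := hK.Dset_meas hs
  have hmh : Measurable (sfn K) := measurable_of_contAt fun _ h => hK.sfn_contAt h
  set w : Eu n → ℝ := fun y => sfn K (‖y‖⁻¹ • y) ^ (n + 2) * sfn K (‖y‖⁻¹ • y) ^ (p - 1) with hw
  have hmw : Measurable w := by
    have h1 : Measurable fun y : Eu n => sfn K (‖y‖⁻¹ • y) :=
      hmh.comp (measurable_norm.inv.smul measurable_id)
    exact (h1.pow_const _).mul (h1.pow_const _)
  have hdet : ∀ y, y ≠ 0 → (dGm K y).det = w y := by
    intro y hy
    have h1 := hK.det_dGm ⟨_, mem_sph hy⟩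
    rw [heq] at h1
    rw [hw]
    simp only at h1 ⊢
    rw [← h1, hK.dGm_smul hy (inv_pos.2 (norm_pos_iff.2 hy))]
  have hw0 : ∀ y, y ≠ 0 → 0 < w y := by
    intro y hy
    have h1 : 0 < sfn K (‖y‖⁻¹ • y) := hK.pos ⟨_, mem_sph hy⟩
    exact mul_pos (pow_pos h1 _) (rpow_pos_of_pos h1 _)
  rw [← lintegral_abs_det_fderiv_eq_addHaar_image volume hmD
    (fun y hy => (hK.Gm_hasFDerivAt hy.1).hasFDerivWithinAt) (hK.Gm_injOn.mono fun y hy => hy.1)]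
  have e1 : ∫⁻ y in Dset K s, ENNReal.ofReal |(dGm K y).det| =
      ∫⁻ y in {0}ᶜ, (Dset K s).indicator (fun y => ENNReal.ofReal (w y)) y := by
    rw [lintegral_indicator hmD, Measure.restrict_restrict hmD]
    have : Dset K s ∩ {0}ᶜ = Dset K s := Set.inter_eq_left.2 fun y hy => hy.1
    rw [this]
    refine setLIntegral_congr_fun hmD fun y hy => ?_
    rw [hdet y hy.1, abs_of_pos (hw0 y hy.1)]
  rw [e1, polar_lint n _ (hmw.ennreal_ofReal.indicator hmD)]
  have e2 : ∀ x : Sph n, ∫⁻ r in Set.Ioi (0 : ℝ), ENNReal.ofReal (r ^ n) *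
      (Dset K s).indicator (fun y => ENNReal.ofReal (w y)) (r • (x : Eu n)) =
      ENNReal.ofReal (((n : ℝ) + 1)⁻¹ * (s x ^ (n + 1) * sfn K (x : Eu n) ^ p)) := by
    intro x
    have hx0 := sph_ne_zero x
    have ph := hK.pos x
    have ps := hpos x
    set R := s x / sfn K x with hR
    have pR : 0 < R := div_pos ps ph
    have hwx : ∀ r : ℝ, 0 < r → w (r • (x : Eu n)) = sfn K x ^ (n + 2) * sfn K x ^ (p - 1) := by
      intro r hr
      have : ‖r • (x : Eu n)‖⁻¹ • (r • (x : Eu n)) = x := by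
        rw [norm_smul, smul_smul]
        have : ‖(x : Eu n)‖ = 1 := by simp
        rw [this, Real.norm_of_nonneg hr.le, mul_one, inv_mul_cancel₀ hr.ne', one_smul]
      simp only [hw, this]
    have e3 : ∀ r ∈ Set.Ioi (0 : ℝ), ENNReal.ofReal (r ^ n) *
      (Dset K s).indicator (fun y => ENNReal.ofReal (w y)) (r • (x : Eu n)) =
        (Set.Ioc 0 R).indicator (fun r => ENNReal.ofReal (r ^ n * (sfn K x ^ (n + 2) * sfn K x ^ (p - 1)))) r := by
      intro r hr
      have hr0 : (0 : ℝ) < r := hr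
      by_cases hrR : r ≤ R
      · have hm : r • (x : Eu n) ∈ Dset K s := by
          refine ⟨smul_ne_zero hr0.ne' hx0, ?_⟩
          rw [hK.sfn_smul hr0.le, hom _ hx0 _ hr0]
          rwa [hR, le_div_iff₀ ph] at hrR
        have hm' : r ∈ Set.Ioc 0 R := ⟨hr0, hrR⟩
        rw [Set.indicator_of_mem hm, Set.indicator_of_mem hm', hwx r hr0, ← ENNReal.ofReal_mul (by positivity)]
      · have hm : r • (x : Eu n) ∉ Dset K s := by
          rintro ⟨-, h2⟩
          rw [hK.sfn_smul hr0.le, hom _ hx0 _ hr0] at h2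
          exact hrR (by rwa [hR, le_div_iff₀ ph])
        have hm' : r ∉ Set.Ioc 0 R := fun h => hrR h.2
        rw [Set.indicator_of_notMem hm, Set.indicator_of_notMem hm', mul_zero]
    rw [setLIntegral_congr_fun measurableSet_Ioi e3, lintegral_indicator measurableSet_Ioc,
      Measure.restrict_restrict measurableSet_Ioc]
    have : Set.Ioc 0 R ∩ Set.Ioi 0 = Set.Ioc 0 R := Set.inter_eq_left.2 fun y hy => hy.1
    rw [this, ← ofReal_integral_eq_lintegral_ofReal]
    · congr 1
      rw [← intervalIntegral.integral_of_le pR.le, intervalIntegral.integral_mul_const, integral_pow, hR]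
      have : sfn K x ^ (p - 1) = sfn K x ^ p / sfn K x := by rw [rpow_sub_one ph.ne']
      rw [this]
      simp only [zero_pow (Nat.succ_ne_zero n), sub_zero, div_pow]
      field_simp
      ring
    · exact (Continuous.integrableOn_Icc (by fun_prop)).mono_set Set.Ioc_subset_Icc_self
    · refine (ae_restrict_iff' measurableSet_Ioc).2 (Filter.Eventually.of_forall fun r hr => ?_)
      have := hr.1
      have h3 := rpow_pos_of_pos ph (p - 1)
      simp only [Pi.zero_apply]
      positivity
  rw [lintegral_congr e2, ← ofReal_integral_eq_lintegral_ofReal, integral_const_mul]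
  · refine sph_integrable (Continuous.mul continuous_const (Continuous.mul ?_ (hK.hp_cont p)))
    exact (sph_continuous hs).pow _
  · refine Filter.Eventually.of_forall fun x => ?_
    have h3 := rpow_pos_of_pos (hK.pos x) p
    have h4 := hpos x
    simp only [Pi.zero_apply]
    positivity

end IsSmoothConvexBody

lemma inv_pow_lower (N : ℕ) : ∃ C : ℝ, 0 ≤ C ∧ ∀ x : ℝ, |x| ≤ 1 / 2 →
    1 + N * x + N * (N + 1) / 2 * x ^ 2 - C * |x| ^ 3 ≤ ((1 - x)⁻¹) ^ N := by
  induction N with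
  | zero => exact ⟨0, le_rfl, fun x _ => by simp⟩
  | succ N ih =>
    obtain ⟨C, hC, h⟩ := ih
    refine ⟨2 * (C + (N + 1) * (N + 2) / 2), by positivity, fun x hx => ?_⟩
    have h1 := h x hx
    have hx1 : 0 < 1 - x := by linarith [(abs_le.1 hx).2]
    have hx2 : (1 - x) * 2 ≥ 1 := by linarith [(abs_le.1 hx).2]
    rw [pow_succ (1 - x)⁻¹, ← div_eq_mul_inv, le_div_iff₀ hx1]
    refine le_trans ?_ h1
    have h3 : -|x| ^ 3 ≤ x ^ 3 := by rw [← abs_pow]; exact neg_abs_le _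
    have h4 : 0 ≤ |x| ^ 3 := by positivity
    have h5 : (0 : ℝ) ≤ (N + 1) * (N + 2) / 2 := by positivity
    have h6 : 0 ≤ (C + (N + 1) * (N + 2) / 2) * |x| ^ 3 * ((1 - x) * 2 - 1) :=
      mul_nonneg (by positivity) (by linarith)
    have h7 := mul_le_mul_of_nonneg_left h3 h5
    push_cast
    nlinarith

lemma pow_upper (N : ℕ) : ∃ C : ℝ, 0 ≤ C ∧ ∀ u : ℝ, |u| ≤ 1 →
    (1 + u) ^ N ≤ 1 + N * u + C * u ^ 2 := by
  induction N with
  | zero => exact ⟨0, le_rfl, fun x _ => by simp⟩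
  | succ N ih =>
    obtain ⟨C, hC, h⟩ := ih
    refine ⟨N + 2 * C, by positivity, fun u hu => ?_⟩
    have h1 := h u hu
    have hu0 := abs_le.1 hu
    rw [pow_succ]
    refine (mul_le_mul_of_nonneg_right h1 (by linarith)).trans ?_
    have : 0 ≤ C * u ^ 2 * (1 - u) := mul_nonneg (by positivity) (by linarith)
    push_cast
    nlinarith

namespace IsSmoothConvexBody
variable {n : ℕ} {K : Set (Eu n)}

lemma taylor3 (hK : IsSmoothConvexBody K) : ∃ C : ℝ, 0 ≤ C ∧ ∀ y u : Eu n, ‖y‖ = 1 → ‖u‖ ≤ 1 / 2 →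
    |sfn K (y + u) - sfn K y - ⟪gradient (sfn K) y, u⟫_ℝ - 1 / 2 * ⟪hessA K y u, u⟫_ℝ| ≤ C * ‖u‖ ^ 3 := by
  have hcpt : IsCompact (closedBall (0 : Eu n) 2 \ ball (0 : Eu n) (1 / 2)) :=
    (isCompact_closedBall _ _).diff isOpen_ball
  have hne : ∀ z ∈ closedBall (0 : Eu n) 2 \ ball (0 : Eu n) (1 / 2), z ≠ 0 := by
    rintro z hz rfl
    exact hz.2 (by simp)
  have hcont : ContinuousOn (fderiv ℝ (hessA K)) (closedBall (0 : Eu n) 2 \ ball (0 : Eu n) (1 / 2)) :=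
    fun z hz => (((hK.hess_contDiffAt (hne z hz)).fderiv_right (m := (⊤ : ℕ∞)) (by norm_cast)).continuousAt).continuousWithinAt
  obtain ⟨C0, hC0⟩ := hcpt.exists_bound_of_continuousOn (f := fderiv ℝ (hessA K)) hcont
  set C := max C0 0 with hCdef
  have hC : 0 ≤ C := le_max_right _ _
  refine ⟨C, hC, fun y u hy hu => ?_⟩
  have hann : ∀ v : Eu n, ‖v‖ ≤ ‖u‖ → y + v ∈ closedBall (0 : Eu n) 2 \ ball (0 : Eu n) (1 / 2) := by
    intro v hv
    constructor
    · rw [mem_closedBall_zero_iff]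
      linarith [norm_add_le y v]
    · rw [mem_ball_zero_iff, not_lt]
      have := norm_sub_norm_le y (-v)
      rw [norm_neg, sub_neg_eq_add] at this
      linarith
  have h0 : ∀ v : Eu n, ‖v‖ ≤ ‖u‖ → y + v ≠ 0 := fun v hv => hne _ (hann v hv)
  have shift : ∀ v : Eu n, HasFDerivAt (fun w : Eu n => y + w) (ContinuousLinearMap.id ℝ (Eu n)) v :=
    fun v => (hasFDerivAt_id v).const_add y
  -- first step
  have s1 : ∀ v : Eu n, ‖v‖ ≤ ‖u‖ → ‖hessA K (y + v) - hessA K y‖ ≤ C * ‖v‖ := by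
    intro v hv
    have := Convex.norm_image_sub_le_of_norm_hasFDerivWithin_le (s := closedBall (0 : Eu n) ‖v‖)
      (f := fun w => hessA K (y + w)) (f' := fun w => fderiv ℝ (hessA K) (y + w)) (C := C) (x := 0) (y := v)
      (fun w hw => by
        have hw' : ‖w‖ ≤ ‖u‖ := (mem_closedBall_zero_iff.1 hw).trans hv
        have h1 := ((hK.hess_contDiffAt (h0 w hw')).differentiableAt (by simp)).hasFDerivAt
        exact (h1.comp w (shift w)).hasFDerivWithinAt)
      (fun w hw => by
        have hw' : ‖w‖ ≤ ‖u‖ := (mem_closedBall_zero_iff.1 hw).trans hv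
        exact (hC0 _ (hann w hw')).trans (le_max_left _ _)) (convex_closedBall _ _) (by simp) (by simp)
    simpa using this
  have s2 : ∀ v : Eu n, ‖v‖ ≤ ‖u‖ → ‖gradient (sfn K) (y + v) - gradient (sfn K) y - hessA K y v‖ ≤ C * ‖v‖ * ‖v‖ := by
    intro v hv
    have := Convex.norm_image_sub_le_of_norm_hasFDerivWithin_le' (s := closedBall (0 : Eu n) ‖v‖)
      (f := fun w => gradient (sfn K) (y + w)) (f' := fun w => hessA K (y + w)) (C := C * ‖v‖)
      (φ := hessA K y) (x := 0) (y := v)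
      (fun w hw => by
        have hw' : ‖w‖ ≤ ‖u‖ := (mem_closedBall_zero_iff.1 hw).trans hv
        exact ((hK.grad_hasFDerivAt (h0 w hw')).comp w (shift w)).hasFDerivWithinAt)
      (fun w hw => by
        have hw' := mem_closedBall_zero_iff.1 hw
        exact (s1 w (hw'.trans hv)).trans (mul_le_mul_of_nonneg_left hw' hC)) (convex_closedBall _ _) (by simp) (by simp)
    simpa using this
  have hy0 : y ≠ 0 := by
    rintro rfl
    simp at hy
  have s3 := Convex.norm_image_sub_le_of_norm_hasFDerivWithin_le (s := closedBall (0 : Eu n) ‖u‖)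
      (f := fun w => sfn K (y + w) - sfn K y - ⟪gradient (sfn K) y, w⟫_ℝ - 1 / 2 * ⟪hessA K y w, w⟫_ℝ)
      (f' := fun w => innerSL ℝ (gradient (sfn K) (y + w) - gradient (sfn K) y - hessA K y w))
      (C := C * ‖u‖ * ‖u‖) (x := 0) (y := u)
      (fun w hw => by
        have hw' : ‖w‖ ≤ ‖u‖ := mem_closedBall_zero_iff.1 hw
        have d1 := (hK.hasFDerivAt (h0 w hw')).comp w (shift w)
        have d2 : HasFDerivAt (fun w => ⟪gradient (sfn K) y, w⟫_ℝ) (innerSL ℝ (gradient (sfn K) y)) w :=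
          (innerSL ℝ (gradient (sfn K) y)).hasFDerivAt
        have d3 := ((hessA K y).hasFDerivAt (x := w)).inner ℝ (hasFDerivAt_id w)
        have d4 := ((d1.sub_const (sfn K y)).sub d2).sub (d3.const_mul (1 / 2))
        refine HasFDerivAt.hasFDerivWithinAt ?_
        convert! d4 using 1
        ext v
        have e1 := hK.hess_symm hy0 v w
        simp [inner_sub_left, inner_add_left, inner_add_right, fderivInnerCLM_apply, e1]
        ring)
      (fun w hw => by
        have hw' := mem_closedBall_zero_iff.1 hw
        rw [innerSL_apply_norm]
        refine (s2 w hw').trans ?_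
        gcongr) (convex_closedBall _ _) (by simp) (by simp)
  have e : C * ‖u‖ ^ 3 = C * ‖u‖ * ‖u‖ * ‖u‖ := by ring
  rw [e]
  simpa using s3

lemma mem_image (hK : IsSmoothConvexBody K) {s : Eu n → ℝ} {m : Eu n} (hm : m ≠ 0)
    (hom : ∀ y, y ≠ 0 → ∀ r : ℝ, 0 < r → s (r • y) = s y)
    (h : ∀ x : Sph n, ⟪m, (x : Eu n)⟫_ℝ ≤ sfn K x * s x) : m ∈ Gm K '' Dset K s := by
  obtain ⟨y, hy, rfl⟩ := hK.Gm_surj hm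
  refine ⟨y, ⟨hy, ?_⟩, rfl⟩
  have h1 := h ⟨_, mem_sph hy⟩
  have ny := norm_pos_iff.2 hy
  simp only at h1
  rw [hK.sfn_smul (inv_pos.2 ny).le, hom y hy _ (inv_pos.2 ny), real_inner_smul_right, mul_assoc] at h1
  have h2 := le_of_mul_le_mul_left h1 (inv_pos.2 ny)
  rw [Gm, real_inner_smul_left, real_inner_comm, hK.inner_grad hy] at h2
  exact le_of_mul_le_mul_left h2 (hK.sfn_pos hy)

lemma bdd_of_cont {f : Sph n → ℝ} (hf : Continuous f) : ∃ B : ℝ, 0 ≤ B ∧ ∀ x, |f x| ≤ B := by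
  obtain ⟨B, hB⟩ := isCompact_univ.exists_bound_of_continuousOn hf.continuousOn
  exact ⟨max B 0, le_max_right _ _, fun x => (hB x (Set.mem_univ x)).trans (le_max_left _ _)⟩

end IsSmoothConvexBody

lemma slope_le {a b C t0 : ℝ} (ht0 : 0 < t0) (h : ∀ t : ℝ, 0 < t → t ≤ t0 → a * t ≤ b * t + C * t ^ 2) :
    a ≤ b := by
  by_contra hab
  push Not at hab
  have hC : 0 < |C| + 1 := by positivity
  set t := min t0 ((a - b) / (2 * (|C| + 1))) with ht
  have ht1 : 0 < t := lt_min ht0 (div_pos (by linarith) (by linarith))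
  have h1 := h t ht1 (min_le_left _ _)
  have h2 : t ≤ (a - b) / (2 * (|C| + 1)) := min_le_right _ _
  rw [le_div_iff₀ (by linarith)] at h2
  have h3 : C ≤ |C| := le_abs_self C
  have h4 : a ≤ b + C * t := by
    refine le_of_mul_le_mul_right ?_ ht1
    linarith [h1, sq t, mul_assoc C t t, (by ring : (b + C * t) * t = b * t + C * t ^ 2)]
  have h5 : C * t ≤ |C| * t := mul_le_mul_of_nonneg_right h3 ht1.le
  nlinarith

namespace IsSmoothConvexBody
variable {n : ℕ} {K : Set (Eu n)}

lemma sfn_contS (hK : IsSmoothConvexBody K) : Continuous fun x : Sph n => sfn K (x : Eu n) :=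
  sph_continuous fun _ h => hK.sfn_contAt h

lemma grad_contS (hK : IsSmoothConvexBody K) : Continuous fun x : Sph n => gradient (sfn K) (x : Eu n) :=
  sph_continuous fun _ h => hK.grad_contAt h

lemma hess_contS (hK : IsSmoothConvexBody K) (v w : Eu n) :
    Continuous fun x : Sph n => ⟪hessA K (x : Eu n) v, w⟫_ℝ :=
  sph_continuous (f := fun y => ⟪hessA K y v, w⟫_ℝ) fun _ h =>
    (((hK.hess_contDiffAt h).continuousAt.clm_apply continuousAt_const).inner continuousAt_const)

set_option maxHeartbeats 2000000 in
lemma four (hK : IsSmoothConvexBody K) {p : ℝ}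
    (heq : ∀ x : Sph n, rK K (x : Eu n) = sfn K (x : Eu n) ^ (p - 1)) (c : Eu n) :
    ‖c‖ ^ 2 * ∫ x : Sph n, sfn K (x : Eu n) ^ p ∂sphMeas n = ((n : ℝ) + 1) *
      ∫ x : Sph n, ⟪(x : Eu n), c⟫_ℝ * ⟪gradient (sfn K) (x : Eu n), c⟫_ℝ / sfn K (x : Eu n) * sfn K (x : Eu n) ^ p ∂sphMeas n := by
  set g : Sph n → ℝ := fun x => ⟪(x : Eu n), c⟫_ℝ * ⟪gradient (sfn K) (x : Eu n), c⟫_ℝ / sfn K (x : Eu n) with hg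
  have hgc : Continuous g := by
    refine Continuous.div ?_ hK.sfn_contS fun x => (hK.pos x).ne'
    exact (by fun_prop : Continuous fun x : Sph n => ⟪(x : Eu n), c⟫_ℝ).mul (hK.grad_contS.inner continuous_const)
  have hhp := hK.hp_cont p
  obtain ⟨Bg, hBg0, hBg⟩ := bdd_of_cont hgc
  obtain ⟨B1, hB10, hB1⟩ := bdd_of_cont (f := fun x : Sph n => 1 / 2 * (⟪hessA K (x : Eu n) c, c⟫_ℝ * ⟪(x : Eu n), c⟫_ℝ ^ 2) / sfn K (x : Eu n))
    (by
      refine Continuous.div ?_ hK.sfn_contS fun x => (hK.pos x).ne'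
      exact continuous_const.mul ((hK.hess_contS c c).mul (by fun_prop)))
  obtain ⟨C1, hC10, hC1⟩ := hK.taylor3
  obtain ⟨B2, hB20, hB2⟩ := bdd_of_cont (f := fun x : Sph n => C1 * (‖c‖ ^ 2) ^ 3 / sfn K (x : Eu n))
    (continuous_const.div hK.sfn_contS fun x => (hK.pos x).ne')
  obtain ⟨C3, hC30, hC3⟩ := pow_upper (n + 1)
  set C2 := B1 + B2 with hC2
  have hC20 : 0 ≤ C2 := by positivity
  set V := ∫ x : Sph n, sfn K (x : Eu n) ^ p ∂sphMeas n with hV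
  set I := ∫ x : Sph n, g x * sfn K (x : Eu n) ^ p ∂sphMeas n with hI
  set t0 : ℝ := (2 * (1 + ‖c‖ ^ 2 + Bg + C2))⁻¹ with ht0
  have hpos0 : 0 < 2 * (1 + ‖c‖ ^ 2 + Bg + C2) := by positivity
  have ht0p : 0 < t0 := by positivity
  set C4 := ((n : ℝ) + 1) * C2 + C3 * (Bg + C2) ^ 2 with hC4
  have hVpos : 0 ≤ V := integral_nonneg fun x => (rpow_pos_of_pos (hK.pos x) p).le
  have key : ∀ t : ℝ, |t| ≤ t0 → (1 + t * ‖c‖ ^ 2) * V ≤ V + ((n : ℝ) + 1) * t * I + C4 * V * t ^ 2 := by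
    intro t ht
    have htm : |t| * (2 * (1 + ‖c‖ ^ 2 + Bg + C2)) ≤ 1 := by
      calc _ ≤ t0 * (2 * (1 + ‖c‖ ^ 2 + Bg + C2)) := mul_le_mul_of_nonneg_right ht hpos0.le
        _ = 1 := inv_mul_cancel₀ hpos0.ne'
    have hat := abs_nonneg t
    have hc2 : 0 ≤ ‖c‖ ^ 2 := by positivity
    have b1 : |t| ≤ 1 / 2 := by nlinarith [mul_nonneg hat hc2, mul_nonneg hat hBg0, mul_nonneg hat hC20]
    have b2 : |t| * ‖c‖ ^ 2 ≤ 1 / 2 := by nlinarith [mul_nonneg hat hc2, mul_nonneg hat hBg0, mul_nonneg hat hC20]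
    have b3 : |t| * (Bg + C2) ≤ 1 / 2 := by nlinarith [mul_nonneg hat hc2, mul_nonneg hat hBg0, mul_nonneg hat hC20]
    have hu : ∀ y : Eu n, ‖(t * ⟪y, c⟫_ℝ) • c‖ ≤ |t| * ‖c‖ ^ 2 * ‖y‖ := by
      intro y
      rw [norm_smul, norm_mul, Real.norm_eq_abs, Real.norm_eq_abs]
      calc |t| * |⟪y, c⟫_ℝ| * ‖c‖ ≤ |t| * (‖y‖ * ‖c‖) * ‖c‖ := by gcongr; exact abs_real_inner_le_norm y c
        _ = _ := by ring
    have hT0 : ∀ y : Eu n, y ≠ 0 → y + (t * ⟪y, c⟫_ℝ) • c ≠ 0 := by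
      intro y hy h0
      have h1 : y = -((t * ⟪y, c⟫_ℝ) • c) := eq_neg_of_add_eq_zero_left h0
      have h2 := hu y
      rw [← norm_neg, ← h1] at h2
      have := norm_pos_iff.2 hy
      nlinarith
    set s : Eu n → ℝ := fun y => sfn K (y + (t * ⟪y, c⟫_ℝ) • c) / sfn K y with hs
    have hsc : ∀ y, y ≠ 0 → ContinuousAt s y := by
      intro y hy
      refine ContinuousAt.div ?_ (hK.sfn_contAt hy) (hK.sfn_pos hy).ne'
      refine ContinuousAt.comp (g := sfn K) (f := fun y : Eu n => y + (t * ⟪y, c⟫_ℝ) • c) (hK.sfn_contAt (hT0 y hy)) (Continuous.continuousAt (by fun_prop))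
    have hsh : ∀ y, y ≠ 0 → ∀ r : ℝ, 0 < r → s (r • y) = s y := by
      intro y hy r hr
      have e : r • y + (t * ⟪r • y, c⟫_ℝ) • c = r • (y + (t * ⟪y, c⟫_ℝ) • c) := by
        rw [real_inner_smul_left]
        module
      simp only [hs]
      rw [e, hK.sfn_smul hr.le, hK.sfn_smul hr.le, mul_div_mul_left _ _ hr.ne']
    have hsp : ∀ x : Sph n, 0 < s x := fun x =>
      div_pos (hK.sfn_pos (hT0 _ (sph_ne_zero x))) (hK.pos x)
    have v1 := hK.vol_formula heq hsc hsh hsp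
    have v0 := hK.vol_formula heq (s := fun _ => 1) (fun _ _ => continuousAt_const) (fun _ _ _ _ => rfl) (fun _ => one_pos)
    simp only [one_pow, one_mul] at v0
    let fc : Module.Dual ℝ (Eu n) := (innerSL ℝ c : Eu n →L[ℝ] ℝ)
    set T : Eu n →ₗ[ℝ] Eu n := LinearMap.transvection fc (t • c) with hT
    have hTa : ∀ z, T z = z + (t * ⟪z, c⟫_ℝ) • c := by
      intro z
      simp only [hT, LinearMap.transvection.apply, fc, ContinuousLinearMap.coe_coe, innerSL_apply_apply]
      rw [real_inner_comm]
      module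
    have hdet : LinearMap.det T = 1 + t * ‖c‖ ^ 2 := by
      rw [hT, LinearMap.transvection.det]
      simp only [fc, ContinuousLinearMap.coe_coe, innerSL_apply_apply, real_inner_smul_right, real_inner_self_eq_norm_sq]
    have hsub : T '' (Gm K '' Dset K fun _ => 1) ⊆ {0} ∪ Gm K '' Dset K s := by
      rintro _ ⟨_, ⟨y, ⟨hy, hy1⟩, rfl⟩, rfl⟩
      by_cases hz : T (Gm K y) = 0
      · exact Or.inl hz
      refine Or.inr (hK.mem_image hz hsh fun x => ?_)
      have e : ⟪T (Gm K y), (x : Eu n)⟫_ℝ = sfn K y * ⟪(x : Eu n) + (t * ⟪(x : Eu n), c⟫_ℝ) • c, gradient (sfn K) y⟫_ℝ := by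
        rw [hTa, Gm]
        simp only [inner_add_left, real_inner_smul_left]
        rw [real_inner_comm (x : Eu n) (gradient (sfn K) y), real_inner_comm c (gradient (sfn K) y), real_inner_comm c (x : Eu n)]
        ring
      rw [e]
      simp only [hs]
      rw [mul_div_cancel₀ _ (hK.pos x).ne']
      have h1 := hK.inner_le ((x : Eu n) + (t * ⟪(x : Eu n), c⟫_ℝ) • c) (hK.grad_mem hy)
      have h2 := (hK.sfn_pos (hT0 _ (sph_ne_zero x))).le
      calc _ ≤ sfn K y * sfn K ((x : Eu n) + (t * ⟪(x : Eu n), c⟫_ℝ) • c) :=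
            mul_le_mul_of_nonneg_left h1 (hK.sfn_pos hy).le
        _ ≤ 1 * _ := mul_le_mul_of_nonneg_right hy1 h2
        _ = _ := one_mul _
    have hdp : 0 < 1 + t * ‖c‖ ^ 2 := by
      have := neg_abs_le t
      nlinarith
    have hm : volume (T '' (Gm K '' Dset K fun _ => 1)) ≤ volume (Gm K '' Dset K s) := by
      refine (measure_mono hsub).trans ((measure_union_le _ _).trans ?_)
      simp
    rw [Measure.addHaar_image_linearMap, hdet, abs_of_pos hdp, v0, v1, ← ENNReal.ofReal_mul hdp.le,
      ENNReal.ofReal_le_ofReal_iff] at hm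
    swap
    · refine mul_nonneg (by positivity) (integral_nonneg fun x => ?_)
      have h3 := rpow_pos_of_pos (hK.pos x) p
      have h4 := hsp x
      simp only [Pi.zero_apply]
      positivity
    have hm2 : (1 + t * ‖c‖ ^ 2) * V ≤ ∫ x : Sph n, s x ^ (n + 1) * sfn K (x : Eu n) ^ p ∂sphMeas n := by
      have : (0 : ℝ) < ((n : ℝ) + 1)⁻¹ := by positivity
      refine le_of_mul_le_mul_left ?_ this
      calc _ = (1 + t * ‖c‖ ^ 2) * (((n : ℝ) + 1)⁻¹ * V) := by ring
        _ ≤ _ := hm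
    refine hm2.trans ?_
    have hle : ∀ x : Sph n, s x ^ (n + 1) * sfn K (x : Eu n) ^ p ≤
        (sfn K (x : Eu n) ^ p + ((n : ℝ) + 1) * t * (g x * sfn K (x : Eu n) ^ p)) + C4 * t ^ 2 * sfn K (x : Eu n) ^ p := by
      intro x
      have hx1 : ‖(x : Eu n)‖ = 1 := by simp
      have ph := hK.pos x
      have hux := hu x
      rw [hx1, mul_one] at hux
      have h1 := hC1 x ((t * ⟪(x : Eu n), c⟫_ℝ) • c) hx1 (hux.trans b2)
      have h2 := (abs_le.1 h1).2
      have h3 : C1 * ‖(t * ⟪(x : Eu n), c⟫_ℝ) • c‖ ^ 3 ≤ t ^ 2 * (C1 * (‖c‖ ^ 2) ^ 3) := by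
        calc C1 * ‖(t * ⟪(x : Eu n), c⟫_ℝ) • c‖ ^ 3 ≤ C1 * (|t| * ‖c‖ ^ 2) ^ 3 := by gcongr
          _ = |t| * (t ^ 2 * (C1 * (‖c‖ ^ 2) ^ 3)) := by rw [← sq_abs t]; ring
          _ ≤ 1 * (t ^ 2 * (C1 * (‖c‖ ^ 2) ^ 3)) := by
              refine mul_le_mul_of_nonneg_right (by linarith) (by positivity)
          _ = _ := one_mul _
      have h4 := (abs_le.1 (hB1 x)).2
      have h5 := (abs_le.1 (hB2 x)).2
      rw [div_le_iff₀ ph] at h4 h5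
      have hsx : s x ≤ 1 + (t * g x + C2 * t ^ 2) := by
        simp only [hs, hg]
        rw [div_le_iff₀ ph]
        simp only [map_smul, real_inner_smul_left, real_inner_smul_right] at h2
        have e : (1 + (t * (⟪(x : Eu n), c⟫_ℝ * ⟪gradient (sfn K) (x : Eu n), c⟫_ℝ / sfn K (x : Eu n)) + C2 * t ^ 2)) * sfn K (x : Eu n)
          = sfn K (x : Eu n) + t * (⟪(x : Eu n), c⟫_ℝ * ⟪gradient (sfn K) (x : Eu n), c⟫_ℝ) + (B1 * sfn K (x : Eu n) + B2 * sfn K (x : Eu n)) * t ^ 2 := by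
          rw [hC2]
          field_simp
          ring
        rw [e]
        have ht2 : 0 ≤ t ^ 2 := sq_nonneg t
        have h6 := mul_le_mul_of_nonneg_right h4 ht2
        have h7 := mul_le_mul_of_nonneg_right h5 ht2
        nlinarith
      have hw : |t * g x + C2 * t ^ 2| ≤ |t| * (Bg + C2) := by
        calc |t * g x + C2 * t ^ 2| ≤ |t * g x| + |C2 * t ^ 2| := abs_add_le _ _
          _ = |t| * |g x| + C2 * (|t| * |t|) := by rw [abs_mul, abs_mul, abs_of_nonneg hC20, abs_pow, sq]
          _ ≤ |t| * Bg + C2 * (|t| * 1) := by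
              gcongr
              · exact hBg x
              · linarith
          _ = _ := by ring
      have h8 : s x ^ (n + 1) ≤ 1 + ((n : ℝ) + 1) * t * g x + C4 * t ^ 2 := by
        refine (pow_le_pow_left₀ (hsp x).le hsx _).trans ((hC3 _ (hw.trans (by linarith))).trans ?_)
        have h9 : (t * g x + C2 * t ^ 2) ^ 2 ≤ t ^ 2 * (Bg + C2) ^ 2 := by
          have := pow_le_pow_left₀ (abs_nonneg _) hw 2
          rwa [mul_pow, sq_abs, sq_abs] at this
        have h10 := mul_le_mul_of_nonneg_left h9 hC30
        rw [hC4]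
        push_cast
        nlinarith
      have h3 := rpow_pos_of_pos ph p
      calc _ ≤ (1 + ((n : ℝ) + 1) * t * g x + C4 * t ^ 2) * sfn K (x : Eu n) ^ p := mul_le_mul_of_nonneg_right h8 h3.le
        _ = _ := by ring
    have i1 : Integrable (fun x : Sph n => sfn K (x : Eu n) ^ p) (sphMeas n) := sph_integrable hhp
    have i2 : Integrable (fun x : Sph n => g x * sfn K (x : Eu n) ^ p) (sphMeas n) := sph_integrable (hgc.mul hhp)
    have i3 : Integrable (fun x : Sph n => s x ^ (n + 1) * sfn K (x : Eu n) ^ p) (sphMeas n) :=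
      sph_integrable (((sph_continuous hsc).pow _).mul hhp)
    refine (integral_mono i3 ((i1.add (i2.const_mul _)).add (i1.const_mul _)) hle).trans (le_of_eq ?_)
    simp only [Pi.add_apply]
    rw [integral_add (by exact i1.add (i2.const_mul _)) (i1.const_mul _), integral_add i1 (i2.const_mul _), integral_const_mul, integral_const_mul]
    ring
  apply le_antisymm
  · refine slope_le (C := C4 * V) ht0p fun t h1 h2 => ?_
    have := key t (by rwa [abs_of_pos h1])
    linarith
  · rw [← neg_le_neg_iff]
    refine slope_le (C := C4 * V) ht0p fun t h1 h2 => ?_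
    have := key (-t) (by rwa [abs_neg, abs_of_pos h1])
    rw [neg_sq] at this
    linarith

end IsSmoothConvexBody

set_option maxHeartbeats 2000000 in
lemma scalar_sigma {F α B : ℝ} (hF : 0 ≤ F) (hα : 0 ≤ α) (hB : 0 ≤ B) :
    ∃ C : ℝ, 0 ≤ C ∧ ∃ t0 : ℝ, 0 < t0 ∧ ∀ t : ℝ, |t| ≤ t0 → ∀ f a k : ℝ, |f| ≤ F → |a| ≤ α → 0 ≤ k → k ≤ B →
      |t| * |f| ≤ 1 / 2 ∧
      0 < 1 + t * f + t ^ 2 * (f ^ 2 + a / 2) + C * |t| ^ 3 ∧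
      1 + t * f + t ^ 2 * (f ^ 2 + a / 2) + C * |t| ^ 3 ≤ 2 ∧
      1 ≤ (1 + t * f + t ^ 2 * (f ^ 2 + a / 2) + C * |t| ^ 3) * (1 - t * f)
        - 1 / 2 * (1 + t * f + t ^ 2 * (f ^ 2 + a / 2) + C * |t| ^ 3) ^ 2 * t ^ 2 * a
        - k * (1 + t * f + t ^ 2 * (f ^ 2 + a / 2) + C * |t| ^ 3) ^ 3 * |t| ^ 3 := by
  set D := F + F ^ 2 + α / 2 + 1 with hD
  have hD0 : 0 < D := by positivity
  set C := 2 * (F * (F ^ 2 + α / 2) + 3 / 2 * α * D + 8 * B) with hC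
  have hC0 : 0 ≤ C := by positivity
  have hp : 0 < 2 * (1 + D + C) := by positivity
  clear_value D C
  refine ⟨C, hC0, (2 * (1 + D + C))⁻¹, by positivity, ?_⟩
  intro t ht f a k hf ha hk hkB
  have htm : |t| * (2 * (1 + D + C)) ≤ 1 := by
    calc _ ≤ (2 * (1 + D + C))⁻¹ * (2 * (1 + D + C)) := mul_le_mul_of_nonneg_right ht hp.le
      _ = 1 := inv_mul_cancel₀ hp.ne'
  set τ := |t| with hτ
  have hτ0 : 0 ≤ τ := abs_nonneg t
  have b0 := mul_nonneg hτ0 hD0.le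
  have b0' := mul_nonneg hτ0 hC0
  have b1 : τ ≤ 1 / 2 := by linarith only [htm, b0, b0', hτ0]
  have b2 : τ * D ≤ 1 / 2 := by linarith only [htm, b0, b0', hτ0]
  have b3 : τ * C ≤ 1 / 2 := by linarith only [htm, b0, b0', hτ0]
  have ht2 : t ^ 2 = τ ^ 2 := (sq_abs t).symm
  clear_value τ
  have hf2 : f ^ 2 ≤ F ^ 2 := by
    rw [← sq_abs]
    exact pow_le_pow_left₀ (abs_nonneg _) hf 2
  have hq : |f ^ 2 + a / 2| ≤ F ^ 2 + α / 2 := by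
    have := abs_le.1 ha
    rw [abs_le]
    constructor <;> linarith only [sq_nonneg f, sq_nonneg F, hf2, this.1, this.2]
  have htf : |t * f| ≤ τ * F := by
    rw [abs_mul, ← hτ]
    exact mul_le_mul_of_nonneg_left hf hτ0
  have hFD : F ≤ D := by rw [hD]; nlinarith [sq_nonneg F]
  have htf2 : τ * |f| ≤ 1 / 2 := (mul_le_mul_of_nonneg_left (hf.trans hFD) hτ0).trans b2
  set q := f ^ 2 + a / 2 with hqd
  set Q := F ^ 2 + α / 2 with hQ
  have hQ0 : 0 ≤ Q := by positivity
  clear_value q Q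
  have htq : |t ^ 2 * q| ≤ τ ^ 2 * Q := by
    rw [abs_mul, abs_of_nonneg (sq_nonneg t), ht2]
    exact mul_le_mul_of_nonneg_left hq (by positivity)
  set σ := 1 + t * f + t ^ 2 * q + C * τ ^ 3 with hσ
  clear_value σ
  have hτ3 : C * τ ^ 3 ≤ τ := by
    have : C * τ ^ 3 = τ * C * τ * τ := by ring
    rw [this]
    have g1 : τ * C * τ ≤ 1 / 2 * (1 / 2) := mul_le_mul b3 b1 hτ0 (by norm_num)
    have g2 := mul_le_mul_of_nonneg_right g1 hτ0
    linarith
  have hτ3' : 0 ≤ C * τ ^ 3 := by positivity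
  have hτQ : τ ^ 2 * Q ≤ τ * Q := by
    have g1 := mul_le_mul_of_nonneg_right b1 (mul_nonneg hτ0 hQ0)
    have g2 := mul_nonneg hτ0 hQ0
    have g3 : τ ^ 2 * Q = τ * (τ * Q) := by ring
    rw [g3]
    linarith
  have hσ1 : |σ - 1| ≤ τ * D := by
    have e : σ - 1 = t * f + t ^ 2 * q + C * τ ^ 3 := by rw [hσ]; ring
    have e2 : τ * D = τ * F + τ * Q + τ := by rw [hD, hQ]; ring
    rw [e, e2, abs_le]
    have h1 := abs_le.1 htf
    have h2 := abs_le.1 htq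
    constructor <;> linarith [h1.1, h1.2, h2.1, h2.2]
  have hσb := abs_le.1 (hσ1.trans b2)
  have hσ0 : 0 < σ := by linarith [hσb.1]
  have hσ2 : σ ≤ 2 := by linarith [hσb.2]
  refine ⟨htf2, hσ0, hσ2, ?_⟩
  have h1 : |σ ^ 2 - 1| ≤ τ * D * 3 := by
    have : σ ^ 2 - 1 = (σ - 1) * (σ + 1) := by ring
    rw [this, abs_mul]
    refine mul_le_mul hσ1 ?_ (abs_nonneg _) b0
    rw [abs_of_pos (by linarith)]
    linarith
  have h2 : |a * (σ ^ 2 - 1)| ≤ α * (τ * D * 3) := by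
    rw [abs_mul]
    exact mul_le_mul ha h1 (abs_nonneg _) hα
  have h3 : |t * f * (t ^ 2 * q)| ≤ τ * F * (τ ^ 2 * Q) := by
    rw [abs_mul]
    exact mul_le_mul htf htq (abs_nonneg _) (by positivity)
  have h4 : k * σ ^ 3 * τ ^ 3 ≤ B * 8 * τ ^ 3 := by
    have : σ ^ 3 ≤ 8 := by
      have := pow_le_pow_left₀ hσ0.le hσ2 3
      linarith
    gcongr
  have h5 : C * τ ^ 3 * (1 - t * f) ≥ C * τ ^ 3 * (1 / 2) := by
    refine mul_le_mul_of_nonneg_left ?_ hτ3'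
    have := (abs_le.1 (htf.trans ((mul_le_mul_of_nonneg_left hFD hτ0).trans b2))).2
    linarith
  have h6 := mul_le_mul_of_nonneg_left (abs_le.1 h2).2 (by positivity : 0 ≤ τ ^ 2 / 2)
  have h7 := (abs_le.1 h3).2
  have e1 : σ * (1 - t * f) - 1 / 2 * σ ^ 2 * t ^ 2 * a - k * σ ^ 3 * τ ^ 3 - 1 =
      - (t * f * (t ^ 2 * q)) + C * τ ^ 3 * (1 - t * f) - τ ^ 2 / 2 * (a * (σ ^ 2 - 1)) - k * σ ^ 3 * τ ^ 3 := by
    have : σ * (1 - t * f) = 1 + t ^ 2 * a / 2 - t * f * (t ^ 2 * q) + C * τ ^ 3 * (1 - t * f) := by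
      rw [hσ, hqd]
      ring
    rw [this, ← ht2]
    ring
  have e2 : C * τ ^ 3 * (1 / 2) = τ * F * (τ ^ 2 * Q) + τ ^ 2 / 2 * (α * (τ * D * 3)) + B * 8 * τ ^ 3 := by
    rw [hC]
    ring
  linarith only [e1, e2, h4, h5, h6, h7]

namespace IsSmoothConvexBody
variable {n : ℕ} {K : Set (Eu n)}

set_option maxHeartbeats 2000000 in
lemma supp_bound (hK : IsSmoothConvexBody K) (e : Eu n) (he : ‖e‖ ≤ 1) (ζ : ℝ)
    (f a : Eu n → ℝ) (hf : f = fun y => ⟪gradient (sfn K) y, e⟫_ℝ - ζ)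
    (ha : a = fun y => sfn K y * ⟪hessA K y e, e⟫_ℝ) :
    ∃ C : ℝ, 0 ≤ C ∧ ∃ t0 : ℝ, 0 < t0 ∧ ∀ t : ℝ, |t| ≤ t0 →
      (∀ x : Sph n, |t * f x| ≤ 1 / 2) ∧ 
      ∀ y : Eu n, y ≠ 0 → sfn K y ≤ (1 - t * f y)⁻¹ → ∀ x : Sph n,
        ⟪Gm K y, (x : Eu n)⟫_ℝ ≤ sfn K x * (1 + t * f x + t ^ 2 * (f x ^ 2 + a x / 2) + C * |t| ^ 3) := by
  have hfh : ∀ y, y ≠ 0 → ∀ r : ℝ, 0 < r → f (r • y) = f y := by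
    intro y hy r hr
    simp only [hf, hK.grad_smul hy hr]
  have hfc : Continuous fun x : Sph n => f x := by
    rw [hf]
    exact (hK.grad_contS.inner continuous_const).sub continuous_const
  have hac : Continuous fun x : Sph n => a x := by
    rw [ha]
    exact hK.sfn_contS.mul (hK.hess_contS e e)
  obtain ⟨F, hF0, hF⟩ := bdd_of_cont hfc
  obtain ⟨α, hα0, hα⟩ := bdd_of_cont hac
  obtain ⟨H, hH0, hH⟩ := bdd_of_cont hK.sfn_contS
  obtain ⟨C1, hC10, hC1⟩ := hK.taylor3
  obtain ⟨C, hC0, t0, ht0, key⟩ := scalar_sigma hF0 hα0 (by positivity : 0 ≤ C1 * H ^ 2)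
  have hHp : 0 < 4 * H + 1 := by positivity
  refine ⟨C, hC0, min t0 (4 * H + 1)⁻¹, lt_min ht0 (by positivity), fun t ht => ⟨fun x => ?_, fun y hy hyL x => ?_⟩⟩
  · rw [abs_mul]
    exact (key t (ht.trans (min_le_left _ _)) (f x) (a x) 0 (hF x) (hα x) le_rfl (by positivity)).1
  have ph := hK.pos x
  have hHx : sfn K (x : Eu n) ≤ H := (le_abs_self _).trans (hH x)
  obtain ⟨-, k1, k2, k3⟩ := key t (ht.trans (min_le_left _ _)) (f x) (a x) (C1 * sfn K (x : Eu n) ^ 2) (hF x) (hα x) (by positivity)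
    (by gcongr)
  set σ := 1 + t * f x + t ^ 2 * (f x ^ 2 + a x / 2) + C * |t| ^ 3 with hσ
  clear_value σ
  have hft : |t * f y| ≤ 1 / 2 := by
    have h1 := (key t (ht.trans (min_le_left _ _)) (f (‖y‖⁻¹ • y)) (a (‖y‖⁻¹ • y)) 0 (hF ⟨_, mem_sph hy⟩) (hα ⟨_, mem_sph hy⟩) le_rfl (by positivity)).1
    rwa [hfh y hy _ (inv_pos.2 (norm_pos_iff.2 hy)), ← abs_mul] at h1
  have h1f : 0 < 1 - t * f y := by linarith [(abs_le.1 hft).2]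
  have hyL2 : sfn K y * (1 - t * f y) ≤ 1 := by
    rwa [← one_div, le_div_iff₀ h1f] at hyL
  set s := sfn K (x : Eu n) * σ with hs
  have hs0 : 0 < s := mul_pos ph k1
  have h1s : s ≤ H * 2 := mul_le_mul hHx k2 k1.le hH0
  clear_value s
  have hst : |s * t| ≤ 1 / 2 := by
    rw [abs_mul, abs_of_pos hs0]
    have h1 := h1s
    have h2 : |t| * (4 * H + 1) ≤ 1 := by
      calc _ ≤ (4 * H + 1)⁻¹ * (4 * H + 1) := mul_le_mul_of_nonneg_right (ht.trans (min_le_right _ _)) hHp.le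
        _ = 1 := inv_mul_cancel₀ hHp.ne'
    have h3 := mul_le_mul_of_nonneg_right h1 (abs_nonneg t)
    linarith only [h2, h3, abs_nonneg t]
  have hx1 : ‖(x : Eu n)‖ = 1 := by simp
  have hnu : ‖(s * t) • e‖ ≤ |s * t| := by
    rw [norm_smul, Real.norm_eq_abs]
    exact mul_le_of_le_one_right (abs_nonneg _) he
  have T1 := (abs_le.1 (hC1 x ((s * t) • e) hx1 (hnu.trans hst))).2
  have T2 : C1 * ‖(s * t) • e‖ ^ 3 ≤ C1 * (s ^ 3 * |t| ^ 3) := by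
    have : |s * t| ^ 3 = s ^ 3 * |t| ^ 3 := by rw [abs_mul, abs_of_pos hs0, mul_pow]
    rw [← this]
    gcongr
  simp only [map_smul, real_inner_smul_left, real_inner_smul_right] at T1
  have T3 : sfn K ((x : Eu n) + (s * t) • e) ≤ s * (1 + t * ζ) := by
    have h1 := mul_le_mul_of_nonneg_left k3 ph.le
    have ef : ⟪gradient (sfn K) (x : Eu n), e⟫_ℝ = f x + ζ := by simp [hf]
    have ea : sfn K (x : Eu n) * ⟪hessA K (x : Eu n) e, e⟫_ℝ = a x := by simp [ha]
    rw [ef] at T1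
    have e1 : sfn K (x : Eu n) * (σ * (1 - t * f x) - 1 / 2 * σ ^ 2 * t ^ 2 * a x - C1 * sfn K (x : Eu n) ^ 2 * σ ^ 3 * |t| ^ 3)
       = s * (1 - t * f x) - 1 / 2 * (s * t * (s * t * ⟪hessA K (x : Eu n) e, e⟫_ℝ)) - C1 * (s ^ 3 * |t| ^ 3) := by
      rw [hs, ← ea]
      ring
    rw [e1] at h1
    linarith
  have h5 := hK.inner_le ((x : Eu n) + (s * t) • e) (hK.grad_mem hy)
  have py := hK.sfn_pos hy
  have e5 : ⟪Gm K y, (x : Eu n)⟫_ℝ = sfn K y * ⟪(x : Eu n) + (s * t) • e, gradient (sfn K) y⟫_ℝ - s * t * (sfn K y * (f y + ζ)) := by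
    have ef : f y + ζ = ⟪e, gradient (sfn K) y⟫_ℝ := by simp [hf, real_inner_comm]
    rw [ef, Gm, inner_add_left, real_inner_smul_left, real_inner_smul_left, real_inner_comm]
    ring
  rw [e5]
  have h6 := mul_le_mul_of_nonneg_left (h5.trans T3) py.le
  have h7 := mul_le_mul_of_nonneg_left hyL2 hs0.le
  linarith only [h6, h7]

end IsSmoothConvexBody

namespace IsSmoothConvexBody
variable {n : ℕ} {K : Set (Eu n)}

lemma bm_int (hK : IsSmoothConvexBody K) {p : ℝ}
    (heq : ∀ x : Sph n, rK K (x : Eu n) = sfn K (x : Eu n) ^ (p - 1))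
    {s1 s2 s3 : Eu n → ℝ}
    (c1 : ∀ y, y ≠ 0 → ContinuousAt s1 y) (c2 : ∀ y, y ≠ 0 → ContinuousAt s2 y)
    (c3 : ∀ y, y ≠ 0 → ContinuousAt s3 y)
    (o1 : ∀ y, y ≠ 0 → ∀ r : ℝ, 0 < r → s1 (r • y) = s1 y)
    (o2 : ∀ y, y ≠ 0 → ∀ r : ℝ, 0 < r → s2 (r • y) = s2 y)
    (o3 : ∀ y, y ≠ 0 → ∀ r : ℝ, 0 < r → s3 (r • y) = s3 y)
    (p1 : ∀ x : Sph n, 0 < s1 x) (p2 : ∀ x : Sph n, 0 < s2 x) (p3 : ∀ x : Sph n, 0 < s3 x)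
    (H : ∀ y1 ∈ Dset K s1, ∀ y2 ∈ Dset K s2, ∀ x : Sph n,
      ⟪Gm K y1, (x : Eu n)⟫_ℝ + ⟪Gm K y2, (x : Eu n)⟫_ℝ ≤ 2 * (sfn K x * s3 x)) :
    (∫ x : Sph n, s1 x ^ (n + 1) * sfn K (x : Eu n) ^ p ∂sphMeas n) *
      (∫ x : Sph n, s2 x ^ (n + 1) * sfn K (x : Eu n) ^ p ∂sphMeas n) ≤
      (∫ x : Sph n, s3 x ^ (n + 1) * sfn K (x : Eu n) ^ p ∂sphMeas n) ^ 2 := by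
  have hb := bm_Eu n (hK.image_meas c1) (hK.image_meas c2)
    ((measurableSet_singleton (0 : Eu n)).union (hK.image_meas c3)) ?_
  · have hnn : ∀ s : Eu n → ℝ, (∀ x : Sph n, 0 < s x) →
        0 ≤ ∫ x : Sph n, s x ^ (n + 1) * sfn K (x : Eu n) ^ p ∂sphMeas n := by
      intro s hs
      refine integral_nonneg fun x => ?_
      have := hs x
      have := hK.pos x
      simp only [Pi.zero_apply]
      positivity
    have hC : volume ({(0 : Eu n)} ∪ Gm K '' Dset K s3) ≤ volume (Gm K '' Dset K s3) := by
      refine (measure_union_le _ _).trans ?_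
      simp
    have hb2 := hb.trans (pow_le_pow_left₀ zero_le hC 2)
    rw [hK.vol_formula heq c1 o1 p1, hK.vol_formula heq c2 o2 p2, hK.vol_formula heq c3 o3 p3] at hb2
    have q1 := hnn s1 p1
    have q2 := hnn s2 p2
    have q3 := hnn s3 p3
    rw [← ENNReal.ofReal_mul (by positivity), ← ENNReal.ofReal_pow (by positivity),
      ENNReal.ofReal_le_ofReal_iff (by positivity)] at hb2
    have hN : (0 : ℝ) < (((n : ℝ) + 1)⁻¹) ^ 2 := by positivity
    refine le_of_mul_le_mul_left ?_ hN
    calc _ = _ := by ring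
      _ ≤ _ := hb2
      _ = _ := by ring
  · rintro _ ⟨y1, h1, rfl⟩ _ ⟨y2, h2, rfl⟩
    by_cases hm : (1 / 2 : ℝ) • (Gm K y1 + Gm K y2) = 0
    · left
      simpa using hm
    · right
      refine hK.mem_image hm o3 fun x => ?_
      rw [real_inner_smul_left, inner_add_left]
      have := H y1 h1 y2 h2 x
      linarith

set_option maxHeartbeats 2000000 in
lemma ineq_one (hK : IsSmoothConvexBody K) {p : ℝ}
    (heq : ∀ x : Sph n, rK K (x : Eu n) = sfn K (x : Eu n) ^ (p - 1))
    (e : Eu n) (he : ‖e‖ ≤ 1) (ζ : ℝ)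
    (f a : Eu n → ℝ) (hf : f = fun y => ⟪gradient (sfn K) y, e⟫_ℝ - ζ)
    (ha : a = fun y => sfn K y * ⟪hessA K y e, e⟫_ℝ)
    (hf0 : ∫ x : Sph n, f x * sfn K (x : Eu n) ^ p ∂sphMeas n = 0) :
    (n : ℝ) * ∫ x : Sph n, f x ^ 2 * sfn K (x : Eu n) ^ p ∂sphMeas n ≤
      ∫ x : Sph n, a x * sfn K (x : Eu n) ^ p ∂sphMeas n := by
  have hfh : ∀ y, y ≠ 0 → ∀ r : ℝ, 0 < r → f (r • y) = f y := by
    intro y hy r hr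
    simp only [hf, hK.grad_smul hy hr]
  have hah : ∀ y, y ≠ 0 → ∀ r : ℝ, 0 < r → a (r • y) = a y := by
    intro y hy r hr
    simp only [ha, hK.hess_smul hy hr, hK.sfn_smul hr.le, ContinuousLinearMap.smul_apply, real_inner_smul_left]
    field_simp
  have hfA : ∀ y, y ≠ 0 → ContinuousAt f y := by
    intro y hy
    rw [hf]
    exact ((hK.grad_contAt hy).inner continuousAt_const).sub continuousAt_const
  have haA : ∀ y, y ≠ 0 → ContinuousAt a y := by
    intro y hy
    rw [ha]
    exact (hK.sfn_contAt hy).mul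
      (((hK.hess_contDiffAt hy).continuousAt.clm_apply continuousAt_const).inner continuousAt_const)
  have hfc : Continuous fun x : Sph n => f x := sph_continuous hfA
  have hac : Continuous fun x : Sph n => a x := sph_continuous haA
  have hhp := hK.hp_cont p
  obtain ⟨F, hF0, hF⟩ := bdd_of_cont hfc
  obtain ⟨Q, hQ0, hQ⟩ := bdd_of_cont (f := fun x : Sph n => f x ^ 2 + a x / 2) ((hfc.pow 2).add (hac.div_const 2))
  obtain ⟨C, hC0, t0, ht0, key⟩ := hK.supp_bound e he ζ f a hf ha
  obtain ⟨C1, hC10, hC1⟩ := inv_pow_lower (n + 1)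
  obtain ⟨C2, hC20, hC2⟩ := pow_upper (n + 1)
  clear hf ha
  set w : Sph n → ℝ := fun x => sfn K (x : Eu n) ^ p with hw
  have hw0 : ∀ x, 0 < w x := fun x => rpow_pos_of_pos (hK.pos x) p
  have iw : Integrable w (sphMeas n) := sph_integrable hhp
  have ifw : Integrable (fun x : Sph n => f x * w x) (sphMeas n) := sph_integrable (hfc.mul hhp)
  have if2 : Integrable (fun x : Sph n => f x ^ 2 * w x) (sphMeas n) := sph_integrable ((hfc.pow 2).mul hhp)
  have iaw : Integrable (fun x : Sph n => a x * w x) (sphMeas n) := sph_integrable (hac.mul hhp)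
  set V := ∫ x, w x ∂sphMeas n with hV
  set F2 := ∫ x : Sph n, f x ^ 2 * w x ∂sphMeas n with hF2
  set A2 := ∫ x : Sph n, a x * w x ∂sphMeas n with hA2
  have hV0 : 0 ≤ V := integral_nonneg fun x => (hw0 x).le
  set N : ℝ := (n : ℝ) + 1 with hN
  have hNp : 0 < N := by positivity
  have hNc : ((n + 1 : ℕ) : ℝ) = N := by push_cast; rfl
  set t1 := min t0 (min (1 / 2) (2 * (Q + C + 1))⁻¹) with ht1
  have hQC : 0 < 2 * (Q + C + 1) := by positivity
  have ht1p : 0 < t1 := by positivity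
  -- lower bound for the outer volumes
  have lower : ∀ t : ℝ, |t| ≤ t1 → V + N * (N + 1) / 2 * t ^ 2 * F2 - C1 * F ^ 3 * |t| ^ 3 * V ≤
      ∫ x : Sph n, ((1 - t * f x)⁻¹) ^ (n + 1) * w x ∂sphMeas n := by
    intro t ht
    have hk := (key t (ht.trans (min_le_left _ _))).1
    have hpt : ∀ x : Sph n, (w x + N * t * (f x * w x) + N * (N + 1) / 2 * t ^ 2 * (f x ^ 2 * w x))
        - C1 * F ^ 3 * |t| ^ 3 * w x ≤ ((1 - t * f x)⁻¹) ^ (n + 1) * w x := by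
      intro x
      have h1 := hC1 (t * f x) (hk x)
      rw [hNc] at h1
      have h2 : C1 * |t * f x| ^ 3 ≤ C1 * F ^ 3 * |t| ^ 3 := by
        have h3 : |f x| ^ 3 ≤ F ^ 3 := pow_le_pow_left₀ (abs_nonneg _) (hF x) 3
        rw [abs_mul, mul_pow]
        calc C1 * (|t| ^ 3 * |f x| ^ 3) ≤ C1 * (|t| ^ 3 * F ^ 3) := by gcongr
          _ = _ := by ring
      calc _ = (1 + N * (t * f x) + N * (N + 1) / 2 * (t * f x) ^ 2 - C1 * F ^ 3 * |t| ^ 3) * w x := by ring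
        _ ≤ _ := mul_le_mul_of_nonneg_right (by linarith) (hw0 x).le
    have icont : Integrable (fun x : Sph n => ((1 - t * f x)⁻¹) ^ (n + 1) * w x) (sphMeas n) := by
      refine sph_integrable (((Continuous.inv₀ (continuous_const.sub (continuous_const.mul hfc)) fun x => ?_).pow _).mul hhp)
      have := (abs_le.1 (hk x)).2
      exact (show (0 : ℝ) < 1 - t * f x by linarith).ne'
    refine le_trans (le_of_eq ?_) (integral_mono (((iw.add (ifw.const_mul _)).add (if2.const_mul _)).sub (iw.const_mul _)) icont hpt)
    simp only [Pi.add_apply, Pi.sub_apply]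
    rw [integral_sub (by exact (iw.add (ifw.const_mul _)).add (if2.const_mul _)) (iw.const_mul _),
      integral_add (by exact iw.add (ifw.const_mul _)) (if2.const_mul _),
      integral_add iw (ifw.const_mul _), integral_const_mul, integral_const_mul, integral_const_mul, hf0]
    ring
  have main : ∀ t : ℝ, 0 < t → t ≤ t1 → N * (N + 1) / 2 * F2 * t ≤ N * (F2 + A2 / 2) * t +
      (C1 * F ^ 3 * V + N * C * V + C2 * (Q + C) ^ 2 * V) * t ^ 2 := by
    intro t htp ht
    have hat : |t| = t := abs_of_pos htp
    have b0 : t ≤ t0 := ht.trans (min_le_left _ _)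
    have b1 : t ≤ 1 / 2 := ht.trans ((min_le_right _ _).trans (min_le_left _ _))
    have b2 : t * (2 * (Q + C + 1)) ≤ 1 := by
      calc _ ≤ (2 * (Q + C + 1))⁻¹ * (2 * (Q + C + 1)) :=
            mul_le_mul_of_nonneg_right (ht.trans ((min_le_right _ _).trans (min_le_right _ _))) hQC.le
        _ = 1 := inv_mul_cancel₀ hQC.ne'
    obtain ⟨k1, k2⟩ := key t (by rwa [hat])
    obtain ⟨m1, m2⟩ := key (-t) (by rwa [abs_neg, hat])
    rw [hat] at k2
    rw [abs_neg, hat] at m2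
    set s3 : Eu n → ℝ := fun y => 1 + (t ^ 2 * (f y ^ 2 + a y / 2) + C * t ^ 3) with hs3
    have hu : ∀ x : Sph n, |t ^ 2 * (f x ^ 2 + a x / 2) + C * t ^ 3| ≤ t ^ 2 * (Q + C) := by
      intro x
      have h1 : |t ^ 2 * (f x ^ 2 + a x / 2)| ≤ t ^ 2 * Q := by
        rw [abs_mul, abs_of_nonneg (sq_nonneg t)]
        exact mul_le_mul_of_nonneg_left (hQ x) (sq_nonneg t)
      have h2 : |C * t ^ 3| ≤ t ^ 2 * C := by
        rw [abs_of_nonneg (by positivity)]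
        have : C * t ^ 3 = t ^ 2 * C * t := by ring
        rw [this]
        exact mul_le_of_le_one_right (by positivity) (by linarith)
      refine (abs_add_le _ _).trans ?_
      linarith
    have hsm : t ^ 2 * (Q + C) ≤ 1 / 2 := by
      have h1 : t * (Q + C) ≤ 1 / 2 := by linarith
      have h2 : t * (t * (Q + C)) ≤ 1 * (1 / 2) := mul_le_mul (by linarith) h1 (by positivity) (by norm_num)
      calc _ = t * (t * (Q + C)) := by ring
        _ ≤ _ := by linarith
    have fb : ∀ y : Eu n, y ≠ 0 → |t * f y| ≤ 1 / 2 := by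
      intro y hy
      have h1 := k1 ⟨_, mem_sph hy⟩
      simp only at h1
      rwa [hfh y hy _ (inv_pos.2 (norm_pos_iff.2 hy))] at h1
    have hcs : ∀ τ : ℝ, |τ| = t → ∀ y : Eu n, y ≠ 0 → 0 < 1 - τ * f y := by
      intro τ hτ y hy
      have h1 := fb y hy
      rw [abs_mul, hat, ← hτ, ← abs_mul] at h1
      linarith [(abs_le.1 h1).2]
    have hcc : ∀ τ : ℝ, |τ| = t → ∀ y : Eu n, y ≠ 0 → ContinuousAt (fun y => (1 - τ * f y)⁻¹) y := by
      intro τ hτ y hy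
      exact (continuousAt_const.sub (continuousAt_const.mul (hfA y hy))).inv₀ (hcs τ hτ y hy).ne'
    have hat' : |(-t)| = t := by rw [abs_neg, hat]
    have hb := hK.bm_int heq (s1 := fun y => (1 - t * f y)⁻¹) (s2 := fun y => (1 - (-t) * f y)⁻¹) (s3 := s3)
      (hcc t hat) (hcc (-t) hat')
      (fun y hy => continuousAt_const.add ((continuousAt_const.mul (((hfA y hy).pow 2).add ((haA y hy).div_const 2))).add continuousAt_const))
      (fun y hy r hr => by simp only [hfh y hy r hr]) (fun y hy r hr => by simp only [hfh y hy r hr])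
      (fun y hy r hr => by simp only [hs3, hfh y hy r hr, hah y hy r hr])
      (fun x => inv_pos.2 (hcs t hat _ (sph_ne_zero x))) (fun x => inv_pos.2 (hcs (-t) hat' _ (sph_ne_zero x)))
      (fun x => by
        have := (abs_le.1 ((hu x).trans hsm)).1
        simp only [hs3]
        linarith)
      (fun y1 h1 y2 h2 x => by
        have g1 := k2 y1 h1.1 h1.2 x
        have g2 := m2 y2 h2.1 h2.2 x
        have : sfn K (x : Eu n) * (1 + t * f x + t ^ 2 * (f x ^ 2 + a x / 2) + C * t ^ 3) +
          sfn K (x : Eu n) * (1 + -t * f x + (-t) ^ 2 * (f x ^ 2 + a x / 2) + C * t ^ 3) = 2 * (sfn K (x : Eu n) * s3 x) := by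
          simp only [hs3]
          ring
        linarith)
    have l1 := lower t (by rwa [hat])
    have l2 := lower (-t) (by rwa [abs_neg, hat])
    rw [hat] at l1
    rw [abs_neg, hat, neg_sq] at l2
    set W := ∫ x : Sph n, s3 x ^ (n + 1) * w x ∂sphMeas n with hW
    have hs3p : ∀ x : Sph n, 0 < s3 x := by
      intro x
      have := (abs_le.1 ((hu x).trans hsm)).1
      simp only [hs3]
      linarith
    have hW0 : 0 ≤ W := by
      refine integral_nonneg fun x => ?_
      have h1 := hs3p x
      have h2 := hw0 x
      simp only [Pi.zero_apply]
      positivity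
    have hWu : W ≤ V + N * t ^ 2 * (F2 + A2 / 2) + (N * C * V + C2 * (Q + C) ^ 2 * V) * t ^ 3 := by
      have hpt : ∀ x : Sph n, s3 x ^ (n + 1) * w x ≤
          (w x + N * t ^ 2 * (f x ^ 2 * w x) + N * t ^ 2 / 2 * (a x * w x)) + (N * C + C2 * (Q + C) ^ 2) * t ^ 3 * w x := by
        intro x
        have h1 := hC2 _ ((hu x).trans (hsm.trans (by norm_num)))
        rw [hNc] at h1
        have h2 : C2 * (t ^ 2 * (f x ^ 2 + a x / 2) + C * t ^ 3) ^ 2 ≤ C2 * (Q + C) ^ 2 * t ^ 3 := by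
          have h3 := pow_le_pow_left₀ (abs_nonneg _) (hu x) 2
          rw [sq_abs] at h3
          have h4 : (t ^ 2 * (Q + C)) ^ 2 ≤ (Q + C) ^ 2 * t ^ 3 := by
            have : (t ^ 2 * (Q + C)) ^ 2 = (Q + C) ^ 2 * t ^ 3 * t := by ring
            rw [this]
            exact mul_le_of_le_one_right (by positivity) (by linarith)
          have := mul_le_mul_of_nonneg_left (h3.trans h4) hC20
          linarith
        calc s3 x ^ (n + 1) * w x ≤ (1 + N * (t ^ 2 * (f x ^ 2 + a x / 2) + C * t ^ 3) + C2 * (Q + C) ^ 2 * t ^ 3) * w x :=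
              mul_le_mul_of_nonneg_right (h1.trans (by linarith)) (hw0 x).le
          _ = _ := by ring
      have i3 : Integrable (fun x : Sph n => s3 x ^ (n + 1) * w x) (sphMeas n) :=
        sph_integrable (((continuous_const.add ((continuous_const.mul ((hfc.pow 2).add (hac.div_const 2))).add continuous_const)).pow _).mul hhp)
      refine (integral_mono i3 (((iw.add (if2.const_mul _)).add (iaw.const_mul _)).add (iw.const_mul _)) hpt).trans (le_of_eq ?_)
      simp only [Pi.add_apply]
      rw [integral_add (by exact (iw.add (if2.const_mul _)).add (iaw.const_mul _)) (iw.const_mul _),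
        integral_add (by exact iw.add (if2.const_mul _)) (iaw.const_mul _),
        integral_add iw (if2.const_mul _), integral_const_mul, integral_const_mul, integral_const_mul]
      ring
    have hfin : V + N * (N + 1) / 2 * t ^ 2 * F2 - C1 * F ^ 3 * t ^ 3 * V ≤ W := by
      by_contra hcon
      push Not at hcon
      have h1 : W < ∫ x : Sph n, ((1 - t * f x)⁻¹) ^ (n + 1) * w x ∂sphMeas n := hcon.trans_le l1
      have h2 : W < ∫ x : Sph n, ((1 - (-t) * f x)⁻¹) ^ (n + 1) * w x ∂sphMeas n := hcon.trans_le l2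
      have h3 := mul_lt_mul'' h1 h2 hW0 hW0
      have h4 := h3.trans_le hb
      rw [sq] at h4
      exact lt_irrefl _ h4
    have hfin2 : t * (N * (N + 1) / 2 * F2 * t) ≤ t * (N * (F2 + A2 / 2) * t +
      (C1 * F ^ 3 * V + N * C * V + C2 * (Q + C) ^ 2 * V) * t ^ 2) := by linarith
    exact le_of_mul_le_mul_left hfin2 htp
  have := slope_le ht1p main
  have h2 : N * ((N + 1) / 2 * F2) ≤ N * (F2 + A2 / 2) := by linarith
  have h3 := le_of_mul_le_mul_left h2 hNp
  rw [hN] at h3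
  linarith

end IsSmoothConvexBody

namespace IsSmoothConvexBody
variable {n : ℕ} {K : Set (Eu n)}

lemma pow_hasFDerivAt (hK : IsSmoothConvexBody K) (q : ℝ) {z : Eu n} (hz : z ≠ 0) :
    HasFDerivAt (fun y => sfn K y ^ q) ((q * sfn K z ^ (q - 1)) • innerSL ℝ (gradient (sfn K) z)) z :=
  (hK.hasFDerivAt hz).rpow_const (Or.inl (hK.sfn_pos hz).ne')

lemma pow_contDiffAt (hK : IsSmoothConvexBody K) (q : ℝ) {z : Eu n} (hz : z ≠ 0) :
    ContDiffAt ℝ 1 (fun y => sfn K y ^ q) z :=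
  ((hK.contDiffAt hz).of_le (by norm_cast)).rpow_const_of_ne (hK.sfn_pos hz).ne'

lemma pow_hom (hK : IsSmoothConvexBody K) (q : ℝ) {z : Eu n} (hz : z ≠ 0) {r : ℝ} (hr : 0 < r) :
    sfn K (r • z) ^ q = r ^ q * sfn K z ^ q := by
  rw [hK.sfn_smul hr.le, mul_rpow hr.le (hK.sfn_pos hz).le]

lemma sph_inner_cont (c : Eu n) : Continuous fun x : Sph n => ⟪(x : Eu n), c⟫_ℝ :=
  continuous_subtype_val.inner continuous_const

lemma V_pos (hK : IsSmoothConvexBody K) (p : ℝ) : 0 < ∫ x : Sph n, sfn K (x : Eu n) ^ p ∂sphMeas n := by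
  refine (hK.hp_cont p).integral_pos_of_hasCompactSupport_nonneg_nonzero (HasCompactSupport.of_compactSpace _)
    (fun x => (rpow_pos_of_pos (hK.pos x) p).le)
    (x := (⟨EuclideanSpace.single 0 1, by simp⟩ : Sph n)) (rpow_pos_of_pos (hK.pos _) p).ne'

lemma cen (hK : IsSmoothConvexBody K) {p : ℝ} {c : Eu n}
    (hc : c = (∫ x : Sph n, sfn K (x : Eu n) ^ p ∂sphMeas n)⁻¹ •
        ∫ x : Sph n, sfn K (x : Eu n) ^ p • gradient (sfn K) (x : Eu n) ∂sphMeas n) (v : Eu n) :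
    ∫ x : Sph n, ⟪gradient (sfn K) (x : Eu n), v⟫_ℝ * sfn K (x : Eu n) ^ p ∂sphMeas n =
      ⟪c, v⟫_ℝ * ∫ x : Sph n, sfn K (x : Eu n) ^ p ∂sphMeas n := by
  have hV := hK.V_pos p
  have hi : Integrable (fun x : Sph n => sfn K (x : Eu n) ^ p • gradient (sfn K) (x : Eu n)) (sphMeas n) :=
    ((hK.hp_cont p).smul hK.grad_contS).integrable_of_hasCompactSupport (HasCompactSupport.of_compactSpace _)
  have h1 := integral_inner (𝕜 := ℝ) hi v
  rw [hc, real_inner_smul_left, real_inner_comm v, ← h1, mul_right_comm, inv_mul_cancel₀ hV.ne', one_mul]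
  refine integral_congr_ae (Filter.Eventually.of_forall fun x => ?_)
  simp only [real_inner_smul_right]
  rw [real_inner_comm, mul_comm]

/-- first identity: divergence of `h^{p+1}`. -/
lemma ibp_two (hK : IsSmoothConvexBody K) {p : ℝ} (c : Eu n) :
    (p + 1) * ∫ x : Sph n, ⟪gradient (sfn K) (x : Eu n), c⟫_ℝ * sfn K (x : Eu n) ^ p ∂sphMeas n =
      ((n : ℝ) + 1 + p) * ∫ x : Sph n, ⟪(x : Eu n), c⟫_ℝ * (sfn K (x : Eu n) * sfn K (x : Eu n) ^ p) ∂sphMeas n := by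
  have h := div_sphere n (fun y => sfn K y ^ (p + 1)) (p + 1)
    (fun z hz => (hK.pow_contDiffAt (p + 1) hz).contDiffWithinAt)
    (fun x hx r hr => hK.pow_hom _ hx hr) c
  have e1 : ∀ x : Sph n, fderiv ℝ (fun y => sfn K y ^ (p + 1)) (x : Eu n) c =
      (p + 1) * (⟪gradient (sfn K) (x : Eu n), c⟫_ℝ * sfn K (x : Eu n) ^ p) := by
    intro x
    rw [(hK.pow_hasFDerivAt (p + 1) (sph_ne_zero x)).fderiv]
    simp only [add_sub_cancel_right]
    simp
    ring
  have e2 : ∀ x : Sph n, sfn K (x : Eu n) ^ (p + 1) = sfn K (x : Eu n) * sfn K (x : Eu n) ^ p := by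
    intro x
    rw [rpow_add_one (hK.pos x).ne', mul_comm]
  simp only [e1, e2, integral_const_mul] at h
  rw [h]
  ring

lemma ibp_one (hK : IsSmoothConvexBody K) {p : ℝ} (e : Eu n) :
    (p + 1) * ∫ x : Sph n, ⟪gradient (sfn K) (x : Eu n), e⟫_ℝ ^ 2 * sfn K (x : Eu n) ^ p ∂sphMeas n +
      ∫ x : Sph n, sfn K (x : Eu n) * ⟪hessA K (x : Eu n) e, e⟫_ℝ * sfn K (x : Eu n) ^ p ∂sphMeas n =
      ((n : ℝ) + 1 + p) * ∫ x : Sph n, ⟪(x : Eu n), e⟫_ℝ * ⟪gradient (sfn K) (x : Eu n), e⟫_ℝ * (sfn K (x : Eu n) * sfn K (x : Eu n) ^ p) ∂sphMeas n := by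
  have hhp := hK.hp_cont p
  have hgd : ∀ z : Eu n, z ≠ 0 → HasFDerivAt (fun y => ⟪gradient (sfn K) y, e⟫_ℝ) ((innerSL ℝ e).comp (hessA K z)) z := by
    intro z hz
    have := ((innerSL ℝ e).hasFDerivAt (x := gradient (sfn K) z)).comp z (hK.grad_hasFDerivAt hz)
    refine this.congr_of_eventuallyEq (Filter.Eventually.of_forall fun y => ?_)
    simp [real_inner_comm]
  have h := div_sphere n (fun y => sfn K y ^ (p + 1) * ⟪gradient (sfn K) y, e⟫_ℝ) (p + 1)
    (fun z hz => ((hK.pow_contDiffAt (p + 1) hz).mul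
      (((hK.grad_contDiffAt hz).of_le (by norm_cast)).inner ℝ contDiffAt_const)).contDiffWithinAt)
    (fun x hx r hr => by simp only [hK.pow_hom _ hx hr, hK.grad_smul hx hr]; ring) e
  have e2 : ∀ x : Sph n, sfn K (x : Eu n) ^ (p + 1) = sfn K (x : Eu n) * sfn K (x : Eu n) ^ p := by
    intro x
    rw [rpow_add_one (hK.pos x).ne', mul_comm]
  have e1 : ∀ x : Sph n, fderiv ℝ (fun y => sfn K y ^ (p + 1) * ⟪gradient (sfn K) y, e⟫_ℝ) (x : Eu n) e =
      (p + 1) * (⟪gradient (sfn K) (x : Eu n), e⟫_ℝ ^ 2 * sfn K (x : Eu n) ^ p) +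
      sfn K (x : Eu n) * ⟪hessA K (x : Eu n) e, e⟫_ℝ * sfn K (x : Eu n) ^ p := by
    intro x
    have hd := ((hK.pow_hasFDerivAt (p + 1) (sph_ne_zero x)).mul (hgd x (sph_ne_zero x))).fderiv
    change fderiv ℝ (fun y => sfn K y ^ (p + 1) * ⟪gradient (sfn K) y, e⟫_ℝ) (x : Eu n) = _ at hd
    rw [hd, e2]
    simp only [add_sub_cancel_right]
    simp [real_inner_comm]
    ring
  simp only [e1, e2] at h
  rw [integral_add, integral_const_mul] at h
  · rw [h, ← add_assoc, add_right_comm]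
    congr 1
    refine integral_congr_ae (Filter.Eventually.of_forall fun x => ?_)
    simp only
    ring
  · exact (sph_integrable (((hK.grad_contS.inner continuous_const).pow 2).mul hhp)).const_mul _
  · exact sph_integrable ((hK.sfn_contS.mul (hK.hess_contS e e)).mul hhp)

lemma ibp_three (hK : IsSmoothConvexBody K) {p : ℝ} (c : Eu n) :
    ‖c‖ ^ 2 * ∫ x : Sph n, sfn K (x : Eu n) ^ p ∂sphMeas n +
      p * ∫ x : Sph n, ⟪(x : Eu n), c⟫_ℝ * ⟪gradient (sfn K) (x : Eu n), c⟫_ℝ / sfn K (x : Eu n) * sfn K (x : Eu n) ^ p ∂sphMeas n =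
      ((n : ℝ) + 1 + p) * ∫ x : Sph n, ⟪(x : Eu n), c⟫_ℝ ^ 2 * sfn K (x : Eu n) ^ p ∂sphMeas n := by
  have hhp := hK.hp_cont p
  have hgd : ∀ z : Eu n, HasFDerivAt (fun y : Eu n => ⟪y, c⟫_ℝ) (innerSL ℝ c) z := by
    intro z
    refine ((innerSL ℝ c).hasFDerivAt (x := z)).congr_of_eventuallyEq (Filter.Eventually.of_forall fun y => ?_)
    simp [real_inner_comm]
  have h := div_sphere n (fun y => ⟪y, c⟫_ℝ * sfn K y ^ p) (p + 1)
    (fun z hz => ((contDiffAt_id.inner ℝ contDiffAt_const).mul (hK.pow_contDiffAt p hz)).contDiffWithinAt)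
    (fun x hx r hr => by
      simp only [hK.pow_hom _ hx hr, real_inner_smul_left, rpow_add_one hr.ne']
      ring) c
  have e1 : ∀ x : Sph n, fderiv ℝ (fun y => ⟪y, c⟫_ℝ * sfn K y ^ p) (x : Eu n) c =
      ‖c‖ ^ 2 * sfn K (x : Eu n) ^ p +
      p * (⟪(x : Eu n), c⟫_ℝ * ⟪gradient (sfn K) (x : Eu n), c⟫_ℝ / sfn K (x : Eu n) * sfn K (x : Eu n) ^ p) := by
    intro x
    have hd := ((hgd x).mul (hK.pow_hasFDerivAt p (sph_ne_zero x))).fderiv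
    change fderiv ℝ (fun y => ⟪y, c⟫_ℝ * sfn K y ^ p) (x : Eu n) = _ at hd
    rw [hd, rpow_sub_one (hK.pos x).ne']
    simp [real_inner_comm]
    ring
  simp only [e1] at h
  rw [integral_add, integral_const_mul, integral_const_mul] at h
  · rw [h, ← add_assoc, add_right_comm]
    congr 1
    refine integral_congr_ae (Filter.Eventually.of_forall fun x => ?_)
    simp only
    ring
  · exact (sph_integrable hhp).const_mul _
  · refine (sph_integrable ((((sph_inner_cont c).mul (hK.grad_contS.inner continuous_const)).div hK.sfn_contS fun x => (hK.pos x).ne').mul hhp)).const_mul _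

lemma sq_sum (v : Eu n) : ‖v‖ ^ 2 = ∑ l, ⟪v, EuclideanSpace.basisFun (Fin (n + 1)) ℝ l⟫_ℝ ^ 2 := by
  rw [EuclideanSpace.real_norm_sq_eq]
  simp [EuclideanSpace.inner_single_right]

lemma inner_sum (v w : Eu n) : ⟪v, w⟫_ℝ = ∑ l, ⟪v, EuclideanSpace.basisFun (Fin (n + 1)) ℝ l⟫_ℝ * ⟪w, EuclideanSpace.basisFun (Fin (n + 1)) ℝ l⟫_ℝ := by
  rw [PiLp.inner_apply]
  simp [EuclideanSpace.inner_single_right, mul_comm]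

lemma sum_one (hK : IsSmoothConvexBody K) {p : ℝ}
    (heq : ∀ x : Sph n, rK K (x : Eu n) = sfn K (x : Eu n) ^ (p - 1)) {c : Eu n}
    (hc : c = (∫ x : Sph n, sfn K (x : Eu n) ^ p ∂sphMeas n)⁻¹ •
        ∫ x : Sph n, sfn K (x : Eu n) ^ p • gradient (sfn K) (x : Eu n) ∂sphMeas n) :
    (n : ℝ) * (∫ x : Sph n, ‖gradient (sfn K) (x : Eu n) - c‖ ^ 2 * sfn K (x : Eu n) ^ p ∂sphMeas n) +
      (p + 1) * ∫ x : Sph n, ‖gradient (sfn K) (x : Eu n)‖ ^ 2 * sfn K (x : Eu n) ^ p ∂sphMeas n ≤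
      ((n : ℝ) + 1 + p) * ∫ x : Sph n, sfn K (x : Eu n) ^ 2 * sfn K (x : Eu n) ^ p ∂sphMeas n := by
  have hhp := hK.hp_cont p
  have hgc : ∀ v, Continuous fun x : Sph n => ⟪gradient (sfn K) (x : Eu n), v⟫_ℝ := fun v => hK.grad_contS.inner continuous_const
  set b := EuclideanSpace.basisFun (Fin (n + 1)) ℝ with hb
  have key : ∀ l, (n : ℝ) * (∫ x : Sph n, (⟪gradient (sfn K) (x : Eu n), b l⟫_ℝ - ⟪c, b l⟫_ℝ) ^ 2 * sfn K (x : Eu n) ^ p ∂sphMeas n) +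
      (p + 1) * ∫ x : Sph n, ⟪gradient (sfn K) (x : Eu n), b l⟫_ℝ ^ 2 * sfn K (x : Eu n) ^ p ∂sphMeas n ≤
      ((n : ℝ) + 1 + p) * ∫ x : Sph n, ⟪(x : Eu n), b l⟫_ℝ * ⟪gradient (sfn K) (x : Eu n), b l⟫_ℝ * (sfn K (x : Eu n) * sfn K (x : Eu n) ^ p) ∂sphMeas n := by
    intro l
    have h1 := hK.ineq_one heq (b l) (by simp) (⟪c, b l⟫_ℝ) _ _ rfl rfl (by
      simp only [sub_mul]
      rw [integral_sub (by exact sph_integrable ((hgc _).mul hhp)) ((sph_integrable hhp).const_mul _), hK.cen hc, integral_const_mul, sub_self])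
    have h2 := hK.ibp_one (p := p) (b l)
    linarith
  have hs := Finset.sum_le_sum (s := Finset.univ) fun l _ => key l
  rw [Finset.sum_add_distrib, ← Finset.mul_sum, ← Finset.mul_sum, ← Finset.mul_sum] at hs
  rw [← integral_finsetSum, ← integral_finsetSum, ← integral_finsetSum] at hs
  · simp only [← Finset.sum_mul] at hs
    have r1 : ∀ x : Sph n, ∑ l, (⟪gradient (sfn K) (x : Eu n), b l⟫_ℝ - ⟪c, b l⟫_ℝ) ^ 2 = ‖gradient (sfn K) (x : Eu n) - c‖ ^ 2 := by
      intro x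
      rw [sq_sum]
      simp only [inner_sub_left, hb]
    have r2 : ∀ x : Sph n, ∑ l, ⟪gradient (sfn K) (x : Eu n), b l⟫_ℝ ^ 2 = ‖gradient (sfn K) (x : Eu n)‖ ^ 2 := by
      intro x
      rw [sq_sum]
    have r3 : ∀ x : Sph n, ∑ l, ⟪(x : Eu n), b l⟫_ℝ * ⟪gradient (sfn K) (x : Eu n), b l⟫_ℝ = sfn K (x : Eu n) := by
      intro x
      rw [← inner_sum, hK.inner_grad (sph_ne_zero x)]
    simp only [r1, r2, r3, ← mul_assoc (sfn K _) (sfn K _) _, ← sq] at hs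
    exact hs
  · exact fun l _ => sph_integrable (((sph_inner_cont _).mul (hgc _)).mul (hK.sfn_contS.mul hhp))
  · exact fun l _ => sph_integrable (((hgc _).pow 2).mul hhp)
  · exact fun l _ => sph_integrable ((((hgc _).sub continuous_const).pow 2).mul hhp)

lemma part_one (hK : IsSmoothConvexBody K) {p : ℝ} (hp : -(n : ℝ) - 1 < p)
    (heq : ∀ x : Sph n, rK K (x : Eu n) = sfn K (x : Eu n) ^ (p - 1)) {c : Eu n}
    (hc : c = (∫ x : Sph n, sfn K (x : Eu n) ^ p ∂sphMeas n)⁻¹ •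
        ∫ x : Sph n, sfn K (x : Eu n) ^ p • gradient (sfn K) (x : Eu n) ∂sphMeas n) :
    ∫ x : Sph n, (‖gradient (sfn K) (x : Eu n) - c‖ ^ 2 -
          (sfn K (x : Eu n) - ⟪(x : Eu n), c⟫_ℝ) ^ 2) * sfn K (x : Eu n) ^ p ∂sphMeas n ≤
        (n : ℝ) * p * ‖c‖ ^ 2 / (((n : ℝ) + 1) * ((n : ℝ) + 1 + p)) *
          ∫ x : Sph n, sfn K (x : Eu n) ^ p ∂sphMeas n := by
  have hhp := hK.hp_cont p
  have hgc : Continuous fun x : Sph n => ⟪gradient (sfn K) (x : Eu n), c⟫_ℝ := hK.grad_contS.inner continuous_const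
  have h1 := hK.sum_one heq hc
  have h2 := hK.ibp_two (p := p) c
  have h3 := hK.ibp_three (p := p) c
  have h4 := hK.four heq c
  have h5 := hK.cen hc c
  rw [real_inner_self_eq_norm_sq] at h5
  rw [h5] at h2
  have iV : Integrable (fun x : Sph n => sfn K (x : Eu n) ^ p) (sphMeas n) := sph_integrable hhp
  have iB : Integrable (fun x : Sph n => ‖gradient (sfn K) (x : Eu n)‖ ^ 2 * sfn K (x : Eu n) ^ p) (sphMeas n) :=
    sph_integrable ((hK.grad_contS.norm.pow 2).mul hhp)
  have iX : Integrable (fun x : Sph n => ⟪gradient (sfn K) (x : Eu n), c⟫_ℝ * sfn K (x : Eu n) ^ p) (sphMeas n) :=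
    sph_integrable (hgc.mul hhp)
  have iH : Integrable (fun x : Sph n => sfn K (x : Eu n) ^ 2 * sfn K (x : Eu n) ^ p) (sphMeas n) :=
    sph_integrable ((hK.sfn_contS.pow 2).mul hhp)
  have ia : Integrable (fun x : Sph n => ⟪(x : Eu n), c⟫_ℝ * (sfn K (x : Eu n) * sfn K (x : Eu n) ^ p)) (sphMeas n) :=
    sph_integrable ((sph_inner_cont c).mul (hK.sfn_contS.mul hhp))
  have iQ : Integrable (fun x : Sph n => ⟪(x : Eu n), c⟫_ℝ ^ 2 * sfn K (x : Eu n) ^ p) (sphMeas n) :=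
    sph_integrable (((sph_inner_cont c).pow 2).mul hhp)
  have iD : Integrable (fun x : Sph n => ‖gradient (sfn K) (x : Eu n) - c‖ ^ 2 * sfn K (x : Eu n) ^ p) (sphMeas n) :=
    sph_integrable (((hK.grad_contS.sub continuous_const).norm.pow 2).mul hhp)
  have e1 : ∫ x : Sph n, ‖gradient (sfn K) (x : Eu n) - c‖ ^ 2 * sfn K (x : Eu n) ^ p ∂sphMeas n =
      (∫ x : Sph n, ‖gradient (sfn K) (x : Eu n)‖ ^ 2 * sfn K (x : Eu n) ^ p ∂sphMeas n) -
      ‖c‖ ^ 2 * ∫ x : Sph n, sfn K (x : Eu n) ^ p ∂sphMeas n := by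
    have : ∀ x : Sph n, ‖gradient (sfn K) (x : Eu n) - c‖ ^ 2 * sfn K (x : Eu n) ^ p =
        ‖gradient (sfn K) (x : Eu n)‖ ^ 2 * sfn K (x : Eu n) ^ p -
        2 * (⟪gradient (sfn K) (x : Eu n), c⟫_ℝ * sfn K (x : Eu n) ^ p) + ‖c‖ ^ 2 * sfn K (x : Eu n) ^ p := by
      intro x
      rw [norm_sub_sq_real]
      ring
    simp only [this]
    rw [integral_add (by exact iB.sub (iX.const_mul _)) (iV.const_mul _), integral_sub iB (iX.const_mul _),
      integral_const_mul, integral_const_mul, h5]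
    ring
  have e2 : ∫ x : Sph n, (‖gradient (sfn K) (x : Eu n) - c‖ ^ 2 -
          (sfn K (x : Eu n) - ⟪(x : Eu n), c⟫_ℝ) ^ 2) * sfn K (x : Eu n) ^ p ∂sphMeas n =
      (∫ x : Sph n, ‖gradient (sfn K) (x : Eu n) - c‖ ^ 2 * sfn K (x : Eu n) ^ p ∂sphMeas n) -
      (∫ x : Sph n, sfn K (x : Eu n) ^ 2 * sfn K (x : Eu n) ^ p ∂sphMeas n) +
      2 * (∫ x : Sph n, ⟪(x : Eu n), c⟫_ℝ * (sfn K (x : Eu n) * sfn K (x : Eu n) ^ p) ∂sphMeas n) -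
      (∫ x : Sph n, ⟪(x : Eu n), c⟫_ℝ ^ 2 * sfn K (x : Eu n) ^ p ∂sphMeas n) := by
    have : ∀ x : Sph n, (‖gradient (sfn K) (x : Eu n) - c‖ ^ 2 -
          (sfn K (x : Eu n) - ⟪(x : Eu n), c⟫_ℝ) ^ 2) * sfn K (x : Eu n) ^ p =
        ‖gradient (sfn K) (x : Eu n) - c‖ ^ 2 * sfn K (x : Eu n) ^ p - sfn K (x : Eu n) ^ 2 * sfn K (x : Eu n) ^ p +
        2 * (⟪(x : Eu n), c⟫_ℝ * (sfn K (x : Eu n) * sfn K (x : Eu n) ^ p)) - ⟪(x : Eu n), c⟫_ℝ ^ 2 * sfn K (x : Eu n) ^ p := by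
      intro x
      ring
    simp only [this]
    rw [integral_sub (by exact (iD.sub iH).add (ia.const_mul _)) iQ, integral_add (by exact iD.sub iH) (ia.const_mul _),
      integral_sub iD iH, integral_const_mul]
  rw [e2, e1]
  rw [e1] at h1
  generalize (∫ x : Sph n, sfn K (x : Eu n) ^ p ∂sphMeas n) = V at *
  generalize (∫ x : Sph n, ‖gradient (sfn K) (x : Eu n)‖ ^ 2 * sfn K (x : Eu n) ^ p ∂sphMeas n) = B at *
  generalize (∫ x : Sph n, sfn K (x : Eu n) ^ 2 * sfn K (x : Eu n) ^ p ∂sphMeas n) = H at *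
  generalize (∫ x : Sph n, ⟪(x : Eu n), c⟫_ℝ * (sfn K (x : Eu n) * sfn K (x : Eu n) ^ p) ∂sphMeas n) = a1 at *
  generalize (∫ x : Sph n, ⟪(x : Eu n), c⟫_ℝ ^ 2 * sfn K (x : Eu n) ^ p ∂sphMeas n) = Q at *
  generalize (∫ x : Sph n, ⟪(x : Eu n), c⟫_ℝ * ⟪gradient (sfn K) (x : Eu n), c⟫_ℝ / sfn K (x : Eu n) * sfn K (x : Eu n) ^ p ∂sphMeas n) = R at *
  generalize ‖c‖ ^ 2 = m at *
  have hN : (0 : ℝ) < (n : ℝ) + 1 := by positivity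
  have hNp : (0 : ℝ) < (n : ℝ) + 1 + p := by linarith
  have hQ : Q = m * V / ((n : ℝ) + 1) := by
    rw [eq_div_iff hN.ne']
    have : ((n : ℝ) + 1 + p) * (Q * ((n : ℝ) + 1)) = ((n : ℝ) + 1 + p) * (m * V) := by
      linear_combination -((n : ℝ) + 1) * h3 - p * h4
    exact mul_left_cancel₀ hNp.ne' this
  have ha : a1 = (p + 1) * (m * V) / ((n : ℝ) + 1 + p) := by
    rw [eq_div_iff hNp.ne']
    linarith
  have hBH : B - H ≤ (n : ℝ) * (m * V) / ((n : ℝ) + 1 + p) := by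
    rw [le_div_iff₀ hNp]
    linarith
  have efin : (n : ℝ) * (m * V) / ((n : ℝ) + 1 + p) - m * V + 2 * a1 - Q =
      (n : ℝ) * p * m / (((n : ℝ) + 1) * ((n : ℝ) + 1 + p)) * V := by
    rw [hQ, ha]
    field_simp
    ring
  linarith

end IsSmoothConvexBody

namespace IsSmoothConvexBody
variable {n : ℕ} {K : Set (Eu n)}

lemma sub_inner_eq (hK : IsSmoothConvexBody K) (c : Eu n) {z : Eu n} (hz : z ≠ 0) :
    sfn K z - ⟪z, c⟫_ℝ = ⟪gradient (sfn K) z - c, z⟫_ℝ := by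
  rw [inner_sub_left, real_inner_comm z, hK.inner_grad hz, real_inner_comm c]

lemma part_two (hK : IsSmoothConvexBody K) (hn : 1 ≤ n) {p : ℝ} (c : Eu n)
    (hle0 : ∫ x : Sph n, (‖gradient (sfn K) (x : Eu n) - c‖ ^ 2 -
          (sfn K (x : Eu n) - ⟪(x : Eu n), c⟫_ℝ) ^ 2) * sfn K (x : Eu n) ^ p ∂sphMeas n ≤ 0) :
    ∀ x y : Sph n,
        sfn K (x : Eu n) - ⟪(x : Eu n), c⟫_ℝ = sfn K (y : Eu n) - ⟪(y : Eu n), c⟫_ℝ := by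
  have hcont : Continuous fun x : Sph n => (‖gradient (sfn K) (x : Eu n) - c‖ ^ 2 -
          (sfn K (x : Eu n) - ⟪(x : Eu n), c⟫_ℝ) ^ 2) * sfn K (x : Eu n) ^ p :=
    (((hK.grad_contS.sub continuous_const).norm.pow 2).sub ((hK.sfn_contS.sub (sph_inner_cont c)).pow 2)).mul (hK.hp_cont p)
  have hexp : ∀ x : Sph n, ‖(gradient (sfn K) (x : Eu n) - c) - (sfn K (x : Eu n) - ⟪(x : Eu n), c⟫_ℝ) • (x : Eu n)‖ ^ 2 =
      ‖gradient (sfn K) (x : Eu n) - c‖ ^ 2 - (sfn K (x : Eu n) - ⟪(x : Eu n), c⟫_ℝ) ^ 2 := by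
    intro x
    have hx1 : ‖(x : Eu n)‖ = 1 := by simp
    rw [norm_sub_sq_real, real_inner_smul_right, ← hK.sub_inner_eq c (sph_ne_zero x), norm_smul, hx1, mul_one,
      Real.norm_eq_abs, sq_abs]
    ring
  have hnn : ∀ x : Sph n, 0 ≤ (‖gradient (sfn K) (x : Eu n) - c‖ ^ 2 -
          (sfn K (x : Eu n) - ⟪(x : Eu n), c⟫_ℝ) ^ 2) * sfn K (x : Eu n) ^ p := by
    intro x
    rw [← hexp]
    have := hK.pos x
    positivity
  have hz : ∀ x : Sph n, (‖gradient (sfn K) (x : Eu n) - c‖ ^ 2 -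
          (sfn K (x : Eu n) - ⟪(x : Eu n), c⟫_ℝ) ^ 2) * sfn K (x : Eu n) ^ p = 0 := by
    intro x
    by_contra hx
    exact absurd (hcont.integral_pos_of_hasCompactSupport_nonneg_nonzero (μ := sphMeas n) (HasCompactSupport.of_compactSpace _)
      hnn (x := x) hx) (not_lt.2 hle0)
  have hg : ∀ x : Sph n, gradient (sfn K) (x : Eu n) - c = (sfn K (x : Eu n) - ⟪(x : Eu n), c⟫_ℝ) • (x : Eu n) := by
    intro x
    have h1 := (mul_eq_zero.1 (hz x)).resolve_right (rpow_pos_of_pos (hK.pos x) p).ne'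
    rw [← hexp, sq_eq_zero_iff, norm_eq_zero, sub_eq_zero] at h1
    exact h1
  have hd : ∀ z : Eu n, z ≠ 0 → HasFDerivAt (fun y : Eu n => (sfn K y - ⟪y, c⟫_ℝ) * ‖y‖⁻¹) (0 : Eu n →L[ℝ] ℝ) z := by
    intro z hz
    have nz := norm_pos_iff.2 hz
    have h1 : HasFDerivAt (fun y : Eu n => ⟪y, c⟫_ℝ) (innerSL ℝ c) z := by
      refine ((innerSL ℝ c).hasFDerivAt (x := z)).congr_of_eventuallyEq (Filter.Eventually.of_forall fun y => ?_)
      simp [real_inner_comm]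
    have h2 := ((hK.hasFDerivAt hz).sub h1).mul ((hasDerivAt_inv nz.ne').comp_hasFDerivAt z (hasFDerivAt_norm_Eu hz))
    have h3 := hg ⟨_, mem_sph hz⟩
    simp only at h3
    rw [hK.grad_smul hz (inv_pos.2 nz), hK.sfn_smul (inv_pos.2 nz).le, real_inner_smul_left, sub_eq_iff_eq_add] at h3
    refine h2.congr_fderiv ?_
    ext v
    simp only [h3]
    simp [inner_add_left, real_inner_smul_left]
    field_simp
    ring
  have hpre : IsPreconnected ({0}ᶜ : Set (Eu n)) := by
    refine (isConnected_compl_singleton_of_one_lt_rank ?_ 0).isPreconnected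
    rw [← Module.finrank_eq_rank, finrank_Eu]
    exact_mod_cast (by omega : 1 < n + 1)
  intro x y
  have := isOpen_compl_singleton.is_const_of_fderiv_eq_zero hpre
    (fun z hz => (hd z hz).differentiableAt.differentiableWithinAt)
    (fun z hz => (hd z hz).fderiv) (sph_ne_zero x) (sph_ne_zero y)
  simpa using this

end IsSmoothConvexBody

/-- For `p ∈ (−n−1, 0]` and `dV = h^p dθ`:
`∫ |∇̄h̃|² dV ≤ (np|c|²/((n+1)(n+1+p))) ∫ dV`; in particular `h̃` is constant on `S^n`. -/
theorem tilde_support_constant (n : ℕ) (hn : 1 ≤ n) (p : ℝ)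
    (hp : p ∈ Set.Ioc (-(n : ℝ) - 1) 0)
    (K : Set (Eu n)) (hK : IsSmoothConvexBody K)
    (heq : ∀ x : Sph n, rK K (x : Eu n) = sfn K (x : Eu n) ^ (p - 1))
    (c : Eu n)
    (hc : c = (∫ x : Sph n, sfn K (x : Eu n) ^ p ∂sphMeas n)⁻¹ •
        ∫ x : Sph n, sfn K (x : Eu n) ^ p • gradient (sfn K) (x : Eu n) ∂sphMeas n) :
    (∫ x : Sph n, (‖gradient (sfn K) (x : Eu n) - c‖ ^ 2 -
          (sfn K (x : Eu n) - ⟪(x : Eu n), c⟫_ℝ) ^ 2) * sfn K (x : Eu n) ^ p ∂sphMeas n ≤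
        (n : ℝ) * p * ‖c‖ ^ 2 / (((n : ℝ) + 1) * ((n : ℝ) + 1 + p)) *
          ∫ x : Sph n, sfn K (x : Eu n) ^ p ∂sphMeas n) ∧
      ∀ x y : Sph n,
        sfn K (x : Eu n) - ⟪(x : Eu n), c⟫_ℝ = sfn K (y : Eu n) - ⟪(y : Eu n), c⟫_ℝ := by

  have h1 := hK.part_one (by linarith [hp.1]) heq hc
  refine ⟨h1, hK.part_two hn c (h1.trans ?_)⟩
  have hV := (hK.V_pos p).le
  have hNp : (0 : ℝ) < (n : ℝ) + 1 + p := by linarith [hp.1]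
  refine mul_nonpos_of_nonpos_of_nonneg (div_nonpos_of_nonpos_of_nonneg ?_ (by positivity)) hV
  exact mul_nonpos_of_nonpos_of_nonneg (mul_nonpos_of_nonneg_of_nonpos (by positivity) hp.2) (by positivity)
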